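/- Let P be a polynomial with integer coefficients of degree r ≥ 2 whose coefficient of x^(r−1) is equal to zero, and let s be a nonzero integer. For every sufficiently small ε > 0 there exists N_0 = N_0(P, s, ε) such that the following holds for all integers N ≥ N_0. Let θ be a real number with 1/1000 ≤ θ ≤ 1/20 and θ ≤ 17 − 12√2 − ε, and set M = ⌊N^θ⌋. Let β_1, β_2 be positive integer multiples of r with r ≤ β_1 < β_2 ≤ M, and let 𝒩 be an integer with N ≤ 𝒩 < 2N. Then the number of integers n satisfying 𝒩 ≤ n < 𝒩 + ⌊N/log N⌋ and N ≤ n < 2N, for which there exist integers x, x_1, x_2 with s·n! = P(x), s·(n−β_1)! = P(x_1) and s·(n−β_2)! = P(x_2), is at most N/(M^3·log N). -/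

import Mathlib

open scoped Nat Classical

namespace FS
open Polynomial

/-- twisted derivation -/
noncomputable def nb {R : Type*} [CommRing R] (q v A : R[X]) : R[X] := q * derivative A + v * A

noncomputable def itn {R : Type*} [CommRing R] (q v A : R[X]) (t : ℕ) : R[X] := (nb q v)^[t] A

lemma itn_zero {R : Type*} [CommRing R] (q v A : R[X]) : itn q v A 0 = A := rfl

lemma itn_succ {R : Type*} [CommRing R] (q v A : R[X]) (t : ℕ) :
    itn q v A (t+1) = q * derivative (itn q v A t) + v * itn q v A t := by
  unfold itn
  rw [Function.iterate_succ_apply']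
  rfl

lemma itn_map {R S : Type*} [CommRing R] [CommRing S] (f : R →+* S) (q v A : R[X]) (t : ℕ) :
    (itn q v A t).map f = itn (q.map f) (v.map f) (A.map f) t := by
  induction t with
  | zero => rfl
  | succ t ih => rw [itn_succ, itn_succ, ← ih]; simp [Polynomial.derivative_map]

lemma itn_natDegree {R : Type*} [CommRing R] (q v A : R[X]) (L M : ℕ) (hA : A.natDegree ≤ L)
    (hq : q.natDegree ≤ M) (hv : v.natDegree ≤ M) (t : ℕ) :
    (itn q v A t).natDegree ≤ L + t * M := by
  induction t with
  | zero => simpa [itn_zero] using hA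
  | succ t ih =>
    rw [itn_succ]
    refine (natDegree_add_le _ _).trans (max_le ?_ ?_)
    · refine natDegree_mul_le.trans ?_
      have := natDegree_derivative_le (itn q v A t)
      have h2 : (t+1) * M = t * M + M := by ring
      omega
    · refine natDegree_mul_le.trans ?_
      have h2 : (t+1) * M = t * M + M := by ring
      omega

lemma X_sub_mul_deriv (a : ℝ) (k : ℕ) (A : ℝ[X]) :
    (X - C a) * derivative ((X - C a)^k * A)
      = (X - C a)^k * (C (k:ℝ) * A + (X - C a) * derivative A) := by
  cases k with
  | zero => simp
  | succ k =>
    simp only [derivative_mul, derivative_X_sub_C_pow]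
    simp only [Nat.add_sub_cancel, map_natCast]
    ring

lemma nonvan (q q1 v A B : ℝ[X]) (a : ℝ) (hq : q = (X - C a) * q1)
    (hv : ∀ m : ℤ, v.eval a ≠ m * q1.eval a) (hA : A ≠ 0) (hB : B ≠ 0) :
    q * (A * derivative B - derivative A * B) + v * A * B ≠ 0 := by
  intro h
  obtain ⟨A1, hA1, hA2⟩ := exists_eq_pow_rootMultiplicity_mul_and_not_dvd A hA a
  obtain ⟨B1, hB1, hB2⟩ := exists_eq_pow_rootMultiplicity_mul_and_not_dvd B hB a
  set α := rootMultiplicity a A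
  set b := rootMultiplicity a B
  have hX : (X - C a : ℝ[X]) ≠ 0 := X_sub_C_ne_zero a
  have dA := X_sub_mul_deriv a α A1
  have dB := X_sub_mul_deriv a b B1
  rw [← hA1] at dA
  rw [← hB1] at dB
  have key : (X - C a)^(α + b) * (q1 * (A1 * (C (b:ℝ) * B1 + (X - C a) * derivative B1)
      - (C (α:ℝ) * A1 + (X - C a) * derivative A1) * B1) + v * A1 * B1) = 0 := by
    rw [← h, hq]
    have : (X - C a) * q1 * (A * derivative B - derivative A * B) + v * A * B
      = q1 * (A * ((X - C a) * derivative B) - ((X - C a) * derivative A) * B) + v * A * B := by ring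
    rw [this, dA, dB]
    conv_rhs => rw [hA1, hB1]
    ring
  have k2 := (mul_eq_zero.mp key).resolve_left (pow_ne_zero _ hX)
  have k3 := congrArg (eval a) k2
  simp at k3
  have eA : eval a A1 ≠ 0 := fun h0 => hA2 (dvd_iff_isRoot.mpr h0)
  have eB : eval a B1 ≠ 0 := fun h0 => hB2 (dvd_iff_isRoot.mpr h0)
  have k4 : (eval a A1 * eval a B1) * (eval a v - ((α:ℤ) - (b:ℤ) : ℤ) * eval a q1) = 0 := by
    push_cast
    linear_combination k3
  rcases mul_eq_zero.mp k4 with h5 | h5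
  · exact (mul_ne_zero eA eB) h5
  · exact hv ((α:ℤ) - (b:ℤ)) (by linarith)

/-- the determinant of three rows -/
noncomputable def dt (q v1 v2 A B Cc : ℝ[X]) (a b c : ℕ) : ℝ[X] :=
  itn q 0 A a * (itn q v1 B b * itn q v2 Cc c - itn q v1 B c * itn q v2 Cc b)
  - itn q 0 A b * (itn q v1 B a * itn q v2 Cc c - itn q v1 B c * itn q v2 Cc a)
  + itn q 0 A c * (itn q v1 B a * itn q v2 Cc b - itn q v1 B b * itn q v2 Cc a)

lemma dt_deriv (q v1 v2 A B Cc : ℝ[X]) (a b c : ℕ) :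
    q * derivative (dt q v1 v2 A B Cc a b c) =
      dt q v1 v2 A B Cc (a+1) b c + dt q v1 v2 A B Cc a (b+1) c + dt q v1 v2 A B Cc a b (c+1)
      - (v1 + v2) * dt q v1 v2 A B Cc a b c := by
  unfold dt
  simp only [itn_succ, derivative_mul, derivative_sub, derivative_add]
  ring

lemma dt_ne_zero (q v1 v2 A B Cc : ℝ[X]) (q1 q2 : ℝ[X]) (a1 a2 : ℝ)
    (hq1 : q = (X - C a1) * q1) (hq2 : q = (X - C a2) * q2)
    (h1 : ∀ m : ℤ, v1.eval a1 ≠ m * q1.eval a1)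
    (h2 : ∀ m : ℤ, v2.eval a1 ≠ m * q1.eval a1)
    (h3 : ∀ m : ℤ, (v2 - v1).eval a2 ≠ m * q2.eval a2)
    (hA : A ≠ 0) (hB : B ≠ 0) (hC : Cc ≠ 0) : dt q v1 v2 A B Cc 0 1 2 ≠ 0 := by
  have n1 := nonvan q q1 v1 A B a1 hq1 h1 hA hB
  have n2 := nonvan q q1 v2 A Cc a1 hq1 h2 hA hC
  have n3 := nonvan q q2 (v2 - v1) _ _ a2 hq2 h3 n1 n2
  intro h
  apply n3
  have : A * dt q v1 v2 A B Cc 0 1 2 = 0 := by rw [h, mul_zero]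
  rw [← this]
  unfold dt
  simp only [itn_succ, itn_zero, derivative_mul, derivative_sub, derivative_add]
  simp only [derivative_zero]
  ring

lemma dt_dvd (q v1 v2 A B Cc : ℝ[X]) (w : ℝ) (hqw : q.eval w ≠ 0) (y0 y1 y2 : ℝ) (hy : y0 ≠ 0)
    (T : ℕ) (hT : ∀ t ≤ T, (itn q 0 A t).eval w * y0 + (itn q v1 B t).eval w * y1
      + (itn q v2 Cc t).eval w * y2 = 0) (m : ℕ) :
    ∀ a b c : ℕ, a + m ≤ T → b + m ≤ T → c + m ≤ T →
      (X - C w)^(m+1) ∣ dt q v1 v2 A B Cc a b c := by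
  have base : ∀ a b c : ℕ, a ≤ T → b ≤ T → c ≤ T → (dt q v1 v2 A B Cc a b c).eval w = 0 := by
    intro a b c ha hb hc
    have e1 := hT a ha
    have e2 := hT b hb
    have e3 := hT c hc
    have : y0 * (dt q v1 v2 A B Cc a b c).eval w = 0 := by
      unfold dt
      simp only [eval_add, eval_sub, eval_mul]
      linear_combination
        (eval w (itn q v1 B b) * eval w (itn q v2 Cc c) - eval w (itn q v1 B c) * eval w (itn q v2 Cc b)) * e1
        - (eval w (itn q v1 B a) * eval w (itn q v2 Cc c) - eval w (itn q v1 B c) * eval w (itn q v2 Cc a)) * e2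
        + (eval w (itn q v1 B a) * eval w (itn q v2 Cc b) - eval w (itn q v1 B b) * eval w (itn q v2 Cc a)) * e3
    exact (mul_eq_zero.mp this).resolve_left hy
  induction m with
  | zero =>
    intro a b c ha hb hc
    rw [zero_add, pow_one]
    exact dvd_iff_isRoot.mpr (base a b c ha hb hc)
  | succ m ih =>
    intro a b c ha hb hc
    have hd : (X - C w)^(m+1) ∣ q * derivative (dt q v1 v2 A B Cc a b c) := by
      rw [dt_deriv]
      refine dvd_sub (dvd_add (dvd_add ?_ ?_) ?_) (Dvd.dvd.mul_left ?_ _) <;>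
        apply ih <;> omega
    have hcop : IsCoprime ((X - C w)^(m+1)) q := by
      apply IsCoprime.pow_left
      rw [(irreducible_X_sub_C w).coprime_iff_not_dvd]
      intro h
      exact hqw (dvd_iff_isRoot.mp h)
    have hd2 := hcop.dvd_of_dvd_mul_left hd
    set d := dt q v1 v2 A B Cc a b c
    have hroot : d.IsRoot w := base a b c (by omega) (by omega) (by omega)
    by_cases hd0 : d = 0
    · rw [hd0]; exact dvd_zero _
    by_cases hd1 : derivative d = 0
    · exfalso
      apply hd0
      have := derivative_eq_zero.mp hd1
      rw [eq_C_of_natDegree_eq_zero this] at hroot ⊢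
      simpa using hroot
    have := derivative_rootMultiplicity_of_root hroot
    rw [← le_rootMultiplicity_iff hd1] at hd2
    rw [← le_rootMultiplicity_iff hd0]
    omega

lemma sum_mult_le (W : ℝ[X]) (hW : W ≠ 0) (s : Finset ℝ) (m : ℕ)
    (h : ∀ w ∈ s, (X - C w)^m ∣ W) : s.card * m ≤ W.natDegree := by
  have : (∏ w ∈ s, (X - C w)^m) ∣ W := by
    apply Finset.prod_dvd_of_coprime
    · intro a _ b _ hab
      exact (isCoprime_X_sub_C_of_isUnit_sub (by simpa [sub_eq_zero] using hab)).pow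
    · exact h
  have h2 := natDegree_le_of_dvd this hW
  rw [natDegree_prod_of_monic _ _ (fun w _ => (monic_X_sub_C w).pow m)] at h2
  simpa [natDegree_pow] using h2

lemma dt_natDegree (q v1 v2 A B Cc : ℝ[X]) (L M : ℕ) (hA : A.natDegree ≤ L)
    (hB : B.natDegree ≤ L) (hC : Cc.natDegree ≤ L)
    (hq : q.natDegree ≤ M) (hv1 : v1.natDegree ≤ M) (hv2 : v2.natDegree ≤ M) :
    (dt q v1 v2 A B Cc 0 1 2).natDegree ≤ 3 * L + 3 * M := by
  have a := itn_natDegree q 0 A L M hA hq (by simp)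
  have b := itn_natDegree q v1 B L M hB hq hv1
  have c := itn_natDegree q v2 Cc L M hC hq hv2
  have a0 := a 0; have a1 := a 1; have a2 := a 2
  have b0 := b 0; have b1 := b 1; have b2 := b 2
  have c0 := c 0; have c1 := c 1; have c2 := c 2
  have mul3 : ∀ (f g h : ℝ[X]) (i j k : ℕ), f.natDegree ≤ i → g.natDegree ≤ j → h.natDegree ≤ k →
      i + j + k ≤ 3 * L + 3 * M → (f * (g * h)).natDegree ≤ 3 * L + 3 * M := by
    intro f g h i j k hf hg hh hs
    have := natDegree_mul_le (p := f) (q := g * h)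
    have := natDegree_mul_le (p := g) (q := h)
    omega
  clear a b c
  unfold dt
  generalize itn q 0 A 0 = p1 at *
  generalize itn q 0 A 1 = p2 at *
  generalize itn q 0 A 2 = p3 at *
  generalize itn q v1 B 0 = p4 at *
  generalize itn q v1 B 1 = p5 at *
  generalize itn q v1 B 2 = p6 at *
  generalize itn q v2 Cc 0 = p7 at *
  generalize itn q v2 Cc 1 = p8 at *
  generalize itn q v2 Cc 2 = p9 at *
  simp only [mul_sub]
  refine (natDegree_add_le _ _).trans (max_le ((natDegree_sub_le _ _).trans (max_le ?_ ?_)) ?_)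
  all_goals refine (natDegree_sub_le _ _).trans (max_le ?_ ?_)
  all_goals first
    | exact mul3 _ _ _ _ _ _ a0 b1 c2 (by omega)
    | exact mul3 _ _ _ _ _ _ a0 b2 c1 (by omega)
    | exact mul3 _ _ _ _ _ _ a1 b0 c2 (by omega)
    | exact mul3 _ _ _ _ _ _ a1 b2 c0 (by omega)
    | exact mul3 _ _ _ _ _ _ a2 b0 c1 (by omega)
    | exact mul3 _ _ _ _ _ _ a2 b1 c0 (by omega)

end FS

namespace FS
open Polynomial

lemma hc_dvd (r k : ℕ) : k ! ∣ r^k * ∏ i ∈ Finset.range k, (1 + i * r) := by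
  rw [Nat.dvd_iff_prime_pow_dvd_dvd]
  intro p v hp hv
  by_cases hpr : p ∣ r
  · have hvk : v ≤ k := by
      have := Fact.mk hp
      rw [padicValNat_dvd_iff_le (Nat.factorial_ne_zero k)] at hv
      rcases Nat.eq_zero_or_pos k with rfl | hk
      · simpa using hv
      · have := padicValNat_factorial_lt_of_ne_zero p (n := k) (by omega)
        omega
    exact ((pow_dvd_pow p hvk).trans (pow_dvd_pow_of_dvd hpr k)).trans (dvd_mul_right _ _)
  · have hcop : Nat.Coprime r (p^v) := ((Nat.Prime.coprime_iff_not_dvd hp).mpr hpr).symm.pow_right v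
    apply Dvd.dvd.mul_left
    obtain ⟨r', hr'⟩ : ∃ r' : ℕ, ((r * r' : ℕ) : ZMod (p^v)) = 1 := by
      have : NeZero (p^v) := ⟨pow_ne_zero _ hp.ne_zero⟩
      refine ⟨((r : ZMod (p^v))⁻¹).val, ?_⟩
      push_cast
      rw [ZMod.natCast_zmod_val]
      exact ZMod.coe_mul_inv_eq_one r hcop
    have h1 : (p^v) ∣ r'.ascFactorial k := hv.trans (Nat.factorial_dvd_ascFactorial r' k)
    rw [← ZMod.natCast_eq_zero_iff] at h1 ⊢
    rw [Nat.ascFactorial_eq_prod_range] at h1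
    have : ((∏ i ∈ Finset.range k, (1 + i * r) : ℕ) : ZMod (p^v))
        = (r : ZMod (p^v))^k * ((∏ i ∈ Finset.range k, (r' + i) : ℕ) : ZMod (p^v)) := by
      push_cast at hr' ⊢
      rw [← Finset.card_range k, ← Finset.prod_const, Finset.card_range, ← Finset.prod_mul_distrib]
      refine Finset.prod_congr rfl fun i _ => ?_
      linear_combination -hr'
    rw [this, h1, mul_zero]

def hc (r k : ℕ) : ℕ := (r^k * ∏ i ∈ Finset.range k, (1 + i * r)) / k !

lemma hc_mul (r k : ℕ) : k ! * hc r k = r^k * ∏ i ∈ Finset.range k, (1 + i * r) :=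
  Nat.mul_div_cancel' (hc_dvd r k)

lemma hc_zero (r : ℕ) : hc r 0 = 1 := by simp [hc]

lemma hc_rec (r k : ℕ) : (k+1) * hc r (k+1) = r * (1 + k * r) * hc r k := by
  have h1 := hc_mul r k
  have h2 := hc_mul r (k+1)
  rw [Finset.prod_range_succ, Nat.factorial_succ] at h2
  have : k ! * ((k+1) * hc r (k+1)) = k ! * (r * (1 + k * r) * hc r k) := by
    calc k ! * ((k+1) * hc r (k+1)) = (k+1) * k ! * hc r (k+1) := by ring
      _ = _ := h2
      _ = (r^k * ∏ i ∈ Finset.range k, (1 + i * r)) * (r * (1 + k * r)) := by ring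
      _ = _ := by rw [← h1]; ring
  exact Nat.eq_of_mul_eq_mul_left (Nat.factorial_pos k) this

lemma hc_le (r : ℕ) (hr : 1 ≤ r) (k : ℕ) : hc r k ≤ (r^2)^k := by
  induction k with
  | zero => simp [hc_zero]
  | succ k ih =>
    have h := hc_rec r k
    have h2 : r * (1 + k * r) ≤ (k+1) * r^2 := by nlinarith
    have : (k+1) * hc r (k+1) ≤ (k+1) * (r^2)^(k+1) := by
      rw [h]
      calc _ ≤ ((k+1) * r^2) * (r^2)^k := Nat.mul_le_mul h2 ih
        _ = _ := by ring
    exact Nat.le_of_mul_le_mul_left this (Nat.succ_pos k)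

noncomputable def hh (r j : ℕ) : PowerSeries ℤ := PowerSeries.mk fun k => (hc r k : ℤ) * (j:ℤ)^k

noncomputable def lin (r j : ℕ) : ℤ[X] := 1 - C ((r:ℤ)^2 * j) * X

lemma coeff_lin_mul (r j : ℕ) (f : PowerSeries ℤ) (k : ℕ) :
    PowerSeries.coeff k ((lin r j : PowerSeries ℤ) * f)
      = PowerSeries.coeff k f - (r:ℤ)^2 * j * (if k = 0 then 0 else PowerSeries.coeff (k-1) f) := by
  have : ((lin r j : ℤ[X]) : PowerSeries ℤ) * f = f - PowerSeries.C ((r:ℤ)^2 * j) * (PowerSeries.X * f) := by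
    unfold lin
    rw [Polynomial.coe_sub, Polynomial.coe_mul, Polynomial.coe_one, Polynomial.coe_C, Polynomial.coe_X]
    ring
  rw [this, map_sub, PowerSeries.coeff_C_mul]
  cases k with
  | zero => simp
  | succ k => rw [PowerSeries.coeff_succ_X_mul]; simp

lemma hh_deriv (r j : ℕ) : (lin r j : PowerSeries ℤ) * PowerSeries.derivative ℤ (hh r j)
    = ((C ((r:ℤ) * j) : ℤ[X]) : PowerSeries ℤ) * hh r j := by
  ext k
  rw [coeff_lin_mul, Polynomial.coe_C, PowerSeries.coeff_C_mul]
  cases k with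
  | zero =>
    have h := hc_rec r 0
    have h' : ((hc r 1 : ℕ) : ℤ) = r := by
      rw [hc_zero] at h; push_cast [← Nat.cast_inj (R := ℤ)] at h; linarith
    simp [PowerSeries.coeff_derivative, hh, hc_zero, h']
  | succ k =>
    have h := hc_rec r (k+1)
    push_cast [← Nat.cast_inj (R := ℤ)] at h
    simp only [PowerSeries.coeff_derivative, hh, PowerSeries.coeff_mk, Nat.add_sub_cancel]
    simp only [Nat.add_eq_zero_iff, one_ne_zero, and_false, if_false]
    push_cast
    have e : (j:ℤ)^(k+1+1) = j^(k+1) * j := by ring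
    rw [e]
    linear_combination ((j:ℤ)^(k+1) * j) * h

noncomputable def gg (r b : ℕ) : PowerSeries ℤ := ∏ j ∈ Finset.range b, hh r j
noncomputable def qq (r β : ℕ) : ℤ[X] := ∏ j ∈ Finset.range β, lin r j
noncomputable def vv (r β b : ℕ) : ℤ[X] :=
  ∑ j ∈ Finset.range b, C ((r:ℤ) * j) * ∏ i ∈ (Finset.range β).erase j, lin r i

lemma gg_deriv (r β b : ℕ) (hb : b ≤ β) :
    (qq r β : PowerSeries ℤ) * PowerSeries.derivative ℤ (gg r b) = (vv r β b : PowerSeries ℤ) * gg r b := by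
  induction b with
  | zero => simp [gg, vv]
  | succ b ih =>
    have h1 : gg r (b+1) = gg r b * hh r b := by simp [gg, Finset.prod_range_succ]
    have h2 : vv r β (b+1) = vv r β b + C ((r:ℤ) * b) * ∏ i ∈ (Finset.range β).erase b, lin r i := by
      simp [vv, Finset.sum_range_succ]
    have h3 : qq r β = lin r b * ∏ i ∈ (Finset.range β).erase b, lin r i := by
      unfold qq
      rw [Finset.mul_prod_erase]
      simpa using hb
    rw [h1, h2, Derivation.leibniz, smul_eq_mul, smul_eq_mul, mul_add]
    have i1 := ih (by omega)
    have i2 := hh_deriv r b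
    have h3' : (qq r β : PowerSeries ℤ) = (lin r b : PowerSeries ℤ) *
      ((∏ i ∈ (Finset.range β).erase b, lin r i : ℤ[X]) : PowerSeries ℤ) := by
      rw [h3, Polynomial.coe_mul]
    rw [Polynomial.coe_add, Polynomial.coe_mul]
    linear_combination hh r b * i1 + gg r b * ((∏ i ∈ (Finset.range β).erase b, lin r i : ℤ[X]) : PowerSeries ℤ) * i2 + (gg r b * (PowerSeries.derivative ℤ) (hh r b)) * h3'

lemma gg_const (r b : ℕ) : PowerSeries.constantCoeff (gg r b) = 1 := by
  unfold gg
  rw [map_prod]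
  apply Finset.prod_eq_one
  intro j _
  rw [← PowerSeries.coeff_zero_eq_constantCoeff_apply]
  simp [hh, hc_zero]

lemma hh_pow (r j : ℕ) : (lin r j : PowerSeries ℤ) * hh r j ^ r = 1 := by
  apply PowerSeries.derivative.ext
  · rw [PowerSeries.derivative_one, Derivation.leibniz, PowerSeries.derivative_pow,
      PowerSeries.derivative_coe, smul_eq_mul, smul_eq_mul]
    have h := hh_deriv r j
    have d : derivative (lin r j) = - C ((r:ℤ)^2 * j) := by simp [lin]
    rw [d]
    rw [Polynomial.coe_C] at h
    rw [Polynomial.coe_neg, Polynomial.coe_C]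
    have hC : (PowerSeries.C ((r:ℤ)^2 * j)) = (r : PowerSeries ℤ) * PowerSeries.C ((r:ℤ)*j) := by
      simp; ring
    rw [hC]
    cases r with
    | zero => simp
    | succ r =>
      simp only [Nat.add_sub_cancel]
      linear_combination (hh (r+1) j ^ r * ((r+1 : ℕ) : PowerSeries ℤ)) * h
  · rw [map_mul, map_pow]
    have : PowerSeries.constantCoeff (hh r j) = 1 := by
      rw [← PowerSeries.coeff_zero_eq_constantCoeff_apply]
      simp [hh, hc_zero]
    rw [this]
    simp [lin]

lemma gg_pow (r b : ℕ) : (qq r b : PowerSeries ℤ) * gg r b ^ r = 1 := by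
  unfold gg
  have : ((qq r b : ℤ[X]) : PowerSeries ℤ) = ∏ j ∈ Finset.range b, (lin r j : PowerSeries ℤ) := by
    unfold qq
    have h := map_prod (Polynomial.coeToPowerSeries.ringHom (R := ℤ)) (lin r) (Finset.range b)
    simp only [Polynomial.coeToPowerSeries.ringHom_apply] at h
    exact h
  rw [this, ← Finset.prod_pow, ← Finset.prod_mul_distrib]
  exact Finset.prod_eq_one fun j _ => hh_pow r j

lemma lin_natDegree (r j : ℕ) : (lin r j).natDegree ≤ 1 := by
  unfold lin
  compute_degree

lemma prod_lin_natDegree (r : ℕ) (s : Finset ℕ) : (∏ j ∈ s, lin r j).natDegree ≤ s.card := by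
  refine (natDegree_prod_le _ _).trans ?_
  refine (Finset.sum_le_card_nsmul _ _ 1 fun j _ => lin_natDegree r j).trans ?_
  simp

lemma qq_natDegree (r β : ℕ) : (qq r β).natDegree ≤ β := by
  have := prod_lin_natDegree r (Finset.range β)
  rwa [Finset.card_range] at this

lemma vv_natDegree (r β b : ℕ) : (vv r β b).natDegree ≤ β := by
  unfold vv
  refine natDegree_sum_le_of_forall_le _ _ fun j _ => ?_
  refine (natDegree_C_mul_le _ _).trans ((prod_lin_natDegree r _).trans ?_)
  exact (Finset.card_erase_le).trans (by simp)

/-- real versions -/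
lemma eval_lin (r j : ℕ) (w : ℝ) : ((lin r j).map (Int.castRingHom ℝ)).eval w = 1 - (r:ℝ)^2 * j * w := by
  simp [lin]

lemma qq_fac (r β j : ℕ) (hr : 2 ≤ r) (hj : 1 ≤ j) (hjb : j < β) :
    (qq r β).map (Int.castRingHom ℝ) = (X - C (1 / ((r:ℝ)^2 * j))) *
      (C (-((r:ℝ)^2 * j)) * (∏ i ∈ (Finset.range β).erase j, lin r i).map (Int.castRingHom ℝ)) := by
  have h3 : qq r β = lin r j * ∏ i ∈ (Finset.range β).erase j, lin r i := by
    unfold qq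
    rw [Finset.mul_prod_erase]
    simpa using hjb
  rw [h3, Polynomial.map_mul, ← mul_assoc]
  congr 1
  have : ((r:ℝ)^2 * j) ≠ 0 := by positivity
  have e : (X - C (1 / ((r:ℝ)^2 * j))) * C (-((r:ℝ)^2 * j)) = C ((1 / ((r:ℝ)^2 * j)) * ((r:ℝ)^2 * j)) - C ((r:ℝ)^2 * j) * X := by
    rw [C_neg, C_mul (a := 1 / ((r:ℝ)^2 * j))]; ring
  rw [e, one_div_mul_cancel this]
  simp [lin]

lemma prod_erase_eval_ne (r β j : ℕ) (hr : 2 ≤ r) (hj : 1 ≤ j) :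
    ((∏ i ∈ (Finset.range β).erase j, lin r i).map (Int.castRingHom ℝ)).eval (1 / ((r:ℝ)^2 * j)) ≠ 0 := by
  rw [Polynomial.map_prod, eval_prod, Finset.prod_ne_zero_iff]
  intro i hi
  rw [eval_lin]
  have hne := Finset.ne_of_mem_erase hi
  intro h
  apply hne
  have hr0 : (r:ℝ) ≠ 0 := by positivity
  have hj0 : (j:ℝ) ≠ 0 := by positivity
  field_simp at h
  have : (j:ℝ) = i := by linarith
  exact_mod_cast this.symm

lemma vv_eval (r β b j : ℕ) (hr : 2 ≤ r) (hj : 1 ≤ j) (hjβ : j < β) :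
    ((vv r β b).map (Int.castRingHom ℝ)).eval (1 / ((r:ℝ)^2 * j))
    = if j < b then (r:ℝ) * j * ((∏ i ∈ (Finset.range β).erase j, lin r i).map (Int.castRingHom ℝ)).eval (1 / ((r:ℝ)^2 * j))
      else 0 := by
  have key : ∀ i, i ≠ j → ((∏ l ∈ (Finset.range β).erase i, lin r l).map (Int.castRingHom ℝ)).eval (1 / ((r:ℝ)^2 * j)) = 0 := by
    intro i hi
    rw [Polynomial.map_prod, eval_prod]
    apply Finset.prod_eq_zero (i := j)
    · simp [hjβ, Ne.symm hi]
    · rw [eval_lin]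
      have hr0 : (r:ℝ) ≠ 0 := by positivity
      have hj0 : (j:ℝ) ≠ 0 := by positivity
      field_simp
      ring
  unfold vv
  rw [Polynomial.map_sum, eval_finsetSum]
  simp only [Polynomial.map_mul, eval_mul, Polynomial.map_C, eval_C]
  split_ifs with h
  · rw [Finset.sum_eq_single j]
    · simp
    · intro i _ hi
      rw [key i hi, mul_zero]
    · intro h'; simp at h'; omega
  · apply Finset.sum_eq_zero
    intro i hi
    rw [key i (by simp at hi; omega), mul_zero]

lemma hv_aux (r β j : ℕ) (hr : 2 ≤ r) (hj : 1 ≤ j) (m : ℤ) :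
    (r:ℝ) * j * ((∏ i ∈ (Finset.range β).erase j, lin r i).map (Int.castRingHom ℝ)).eval (1 / ((r:ℝ)^2 * j))
    ≠ m * (C (-((r:ℝ)^2 * j)) * (∏ i ∈ (Finset.range β).erase j, lin r i).map (Int.castRingHom ℝ)).eval (1 / ((r:ℝ)^2 * j)) := by
  have h := prod_erase_eval_ne r β j hr hj
  intro he
  rw [eval_mul, eval_C] at he
  set E := ((∏ i ∈ (Finset.range β).erase j, lin r i).map (Int.castRingHom ℝ)).eval (1 / ((r:ℝ)^2 * j))
  have h2 : ((r:ℝ) * j * E) * (1 + m * r) = 0 := by linear_combination he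
  have hr0 : (r:ℝ) ≠ 0 := by positivity
  have hj0 : (j:ℝ) ≠ 0 := by positivity
  rcases mul_eq_zero.mp h2 with h3 | h3
  · exact (mul_ne_zero (mul_ne_zero hr0 hj0) h) h3
  · have h4 : (1:ℤ) + m * r = 0 := by exact_mod_cast h3
    have h5 : (r:ℤ) ∣ 1 := ⟨-m, by linarith⟩
    have h6 := Int.le_of_dvd one_pos h5
    omega

end FS

namespace FS
open Polynomial

lemma X_pow_dvd_deriv (S : ℕ) (f : PowerSeries ℤ) (h : PowerSeries.X^S ∣ f) :
    PowerSeries.X^(S-1) ∣ PowerSeries.derivative ℤ f := by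
  rw [PowerSeries.X_pow_dvd_iff] at h ⊢
  intro m hm
  rw [PowerSeries.coeff_derivative, h (m+1) (by omega), zero_mul]

lemma poly_eq_zero_of_dvd (S : ℕ) (N : ℤ[X]) (h : PowerSeries.X^S ∣ (N : PowerSeries ℤ))
    (hN : N.natDegree < S) : N = 0 := by
  rw [PowerSeries.X_pow_dvd_iff] at h
  ext k
  rw [coeff_zero]
  by_cases hk : k < S
  · have := h k hk
    rwa [Polynomial.coeff_coe] at this
  · exact coeff_eq_zero_of_natDegree_lt (by omega)

lemma dvd_of_mul_unit (S : ℕ) (f h : PowerSeries ℤ) (hh : PowerSeries.constantCoeff h = 1)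
    (hd : PowerSeries.X^S ∣ f * h) : PowerSeries.X^S ∣ f := by
  have hu : IsUnit h := by
    rw [PowerSeries.isUnit_iff_constantCoeff, hh]; exact isUnit_one
  exact (hu.dvd_mul_right).mp hd

lemma single (U : ℤ[X]) (h : PowerSeries ℤ) (hc : PowerSeries.constantCoeff h = 1) (S : ℕ)
    (hU : U.natDegree < S) (hd : PowerSeries.X^S ∣ (U : PowerSeries ℤ) * h) : U = 0 :=
  poly_eq_zero_of_dvd S U (dvd_of_mul_unit S _ h hc hd) hU

lemma pair (q p1 p2 U V : ℤ[X]) (h1 h2 : PowerSeries ℤ)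
    (e1 : (q : PowerSeries ℤ) * PowerSeries.derivative ℤ h1 = p1 * h1)
    (e2 : (q : PowerSeries ℤ) * PowerSeries.derivative ℤ h2 = p2 * h2)
    (c1 : PowerSeries.constantCoeff h1 = 1) (c2 : PowerSeries.constantCoeff h2 = 1)
    (L M S : ℕ) (hU : U.natDegree ≤ L) (hV : V.natDegree ≤ L) (hq : q.natDegree ≤ M)
    (hp1 : p1.natDegree ≤ M) (hp2 : p2.natDegree ≤ M) (hS : 2 * L + M + 1 < S)
    (hord : PowerSeries.X^S ∣ (U : PowerSeries ℤ) * h1 + (V : PowerSeries ℤ) * h2)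
    (a : ℝ) (q1 : ℝ[X]) (hqa : q.map (Int.castRingHom ℝ) = (X - C a) * q1)
    (hv : ∀ m : ℤ, ((p2 - p1).map (Int.castRingHom ℝ)).eval a ≠ m * q1.eval a) :
    U = 0 ∧ V = 0 := by
  by_cases hU0 : U = 0
  · refine ⟨hU0, ?_⟩
    rw [hU0] at hord
    simp only [Polynomial.coe_zero, zero_mul, zero_add] at hord
    exact single V h2 c2 S (by omega) hord
  by_cases hV0 : V = 0
  · refine ⟨?_, hV0⟩
    rw [hV0] at hord
    simp only [Polynomial.coe_zero, zero_mul, add_zero] at hord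
    exact single U h1 c1 S (by omega) hord
  exfalso
  set N : ℤ[X] := q * (U * derivative V - derivative U * V) + (p2 - p1) * U * V with hN
  have inj : Function.Injective (Int.castRingHom ℝ) := Int.cast_injective
  have hne := nonvan _ q1 _ (U.map (Int.castRingHom ℝ)) (V.map (Int.castRingHom ℝ)) a hqa hv
    ((Polynomial.map_ne_zero_iff inj).mpr hU0) ((Polynomial.map_ne_zero_iff inj).mpr hV0)
  have hNne : N ≠ 0 := by
    intro h0
    apply hne
    have := congrArg (Polynomial.map (Int.castRingHom ℝ)) h0
    rw [hN] at this
    simpa [Polynomial.derivative_map] using this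
  apply hNne
  apply poly_eq_zero_of_dvd (S-1)
  · apply dvd_of_mul_unit (S-1) _ (h1 * h2) (by rw [map_mul, c1, c2, one_mul])
    set R := (U : PowerSeries ℤ) * h1 + (V : PowerSeries ℤ) * h2 with hR
    have key : (N : PowerSeries ℤ) * (h1 * h2) =
       U * h1 * (q * PowerSeries.derivative ℤ R) - R * (q * PowerSeries.derivative ℤ (U * h1)) := by
      rw [hN, hR]
      simp only [Polynomial.coe_add, Polynomial.coe_mul, Polynomial.coe_sub, map_add,
        Derivation.leibniz, PowerSeries.derivative_coe, smul_eq_mul]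
      linear_combination (-(U:PowerSeries ℤ) * h1 * V) * e2 + (V * h2 * U : PowerSeries ℤ) * e1
    rw [key]
    have hd1 := X_pow_dvd_deriv S R hord
    have hd0 : PowerSeries.X^(S-1) ∣ R := (pow_dvd_pow _ (by omega)).trans hord
    exact dvd_sub (Dvd.dvd.mul_left (Dvd.dvd.mul_left hd1 _) _) (Dvd.dvd.mul_right hd0 _)
  · have : N.natDegree ≤ 2 * L + M := by
      rw [hN]
      have d1 := natDegree_derivative_le U
      have d2 := natDegree_derivative_le V
      refine (natDegree_add_le _ _).trans (max_le ?_ ?_)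
      · refine natDegree_mul_le.trans ?_
        have : (U * derivative V - derivative U * V).natDegree ≤ 2 * L := by
          refine (natDegree_sub_le _ _).trans (max_le ?_ ?_)
          · refine natDegree_mul_le.trans ?_; omega
          · refine natDegree_mul_le.trans ?_; omega
        omega
      · refine natDegree_mul_le.trans ?_
        have := natDegree_mul_le (p := p2 - p1) (q := U)
        have := (natDegree_sub_le p2 p1).trans (max_le hp2 hp1)
        omega
    omega

lemma siegel_gen (ι : Type) [Fintype ι] (S Xb : ℕ) (E : ℕ → ι → ℕ) (V : ℕ → ℕ)
    (hE : ∀ k, ∑ i, E k i ≤ V k)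
    (hcard : ∏ k ∈ Finset.range S, (V k * Xb + 1) < (Xb + 1)^(Fintype.card ι)) :
    ∃ d : ι → ℤ, d ≠ 0 ∧ (∀ i, |d i| ≤ Xb) ∧ ∀ k < S, ∑ i, (E k i : ℤ) * d i = 0 := by
  let dom : Finset (ι → ℕ) := Fintype.piFinset fun _ => Finset.range (Xb + 1)
  let cod : Finset (Fin S → ℕ) := Fintype.piFinset fun k => Finset.range (V k * Xb + 1)
  let F : (ι → ℕ) → (Fin S → ℕ) := fun d k => ∑ i, E k i * d i
  have hc : cod.card < dom.card := by
    simp only [dom, cod, Fintype.card_piFinset, Finset.card_range, Finset.prod_const, Finset.card_univ]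
    rwa [Finset.prod_range] at hcard
  have hmaps : ∀ a ∈ dom, F a ∈ cod := by
    intro a ha
    simp only [dom, cod, Fintype.mem_piFinset, Finset.mem_range] at ha ⊢
    intro k
    have : F a k ≤ V k * Xb := by
      calc F a k ≤ ∑ i, E k i * Xb := Finset.sum_le_sum fun i _ =>
            Nat.mul_le_mul_left _ (Nat.lt_succ_iff.mp (ha i))
        _ = (∑ i, E k i) * Xb := (Finset.sum_mul _ _ _).symm
        _ ≤ _ := Nat.mul_le_mul_right _ (hE k)
    omega
  obtain ⟨a, ha, b, hb, hab, hF⟩ := Finset.exists_ne_map_eq_of_card_lt_of_maps_to hc hmaps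
  refine ⟨fun i => (a i : ℤ) - b i, ?_, ?_, ?_⟩
  · intro h
    apply hab
    funext i
    have := congrFun h i
    simp only [Pi.zero_apply] at this
    omega
  · intro i
    simp only [dom, Fintype.mem_piFinset, Finset.mem_range] at ha hb
    have := ha i
    have := hb i
    change |(a i : ℤ) - b i| ≤ Xb
    rw [abs_le]
    constructor <;> omega
  · intro k hk
    have h1 := congrFun hF ⟨k, hk⟩
    simp only [F] at h1
    simp only [mul_sub, Finset.sum_sub_distrib]
    rw [sub_eq_zero]
    exact_mod_cast h1

lemma coeff_sum_mul (L : ℕ) (d : Fin (L+1) → ℤ) (g : PowerSeries ℤ) (k : ℕ) :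
    PowerSeries.coeff k (((∑ i : Fin (L+1), monomial (i:ℕ) (d i) : ℤ[X]) : PowerSeries ℤ) * g)
     = ∑ i : Fin (L+1), PowerSeries.coeff k ((PowerSeries.X : PowerSeries ℤ)^(i:ℕ) * g) * d i := by
  have h : ((∑ i : Fin (L+1), monomial (i:ℕ) (d i) : ℤ[X]) : PowerSeries ℤ)
      = ∑ i : Fin (L+1), PowerSeries.C (d i) * PowerSeries.X^(i:ℕ) := by
    have h := map_sum (Polynomial.coeToPowerSeries.ringHom (R := ℤ))
      (fun i : Fin (L+1) => monomial (i:ℕ) (d i)) Finset.univ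
    simp only [Polynomial.coeToPowerSeries.ringHom_apply] at h
    rw [h]
    refine Finset.sum_congr rfl fun i _ => ?_
    rw [← C_mul_X_pow_eq_monomial, Polynomial.coe_mul, Polynomial.coe_C, Polynomial.coe_pow, Polynomial.coe_X]
  rw [h, Finset.sum_mul, map_sum]
  refine Finset.sum_congr rfl fun i _ => ?_
  rw [mul_assoc, PowerSeries.coeff_C_mul, mul_comm]

lemma coeff_sum_monomial (L : ℕ) (d : Fin (L+1) → ℤ) (k : ℕ) :
    (∑ i : Fin (L+1), monomial (i:ℕ) (d i) : ℤ[X]).coeff k = if h : k < L + 1 then d ⟨k, h⟩ else 0 := by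
  rw [finsetSum_coeff]
  simp only [coeff_monomial]
  split_ifs with h
  · rw [Finset.sum_eq_single ⟨k, h⟩]
    · simp
    · intro i _ hi
      rw [if_neg]
      intro h'; apply hi; ext; exact h'
    · simp
  · apply Finset.sum_eq_zero
    intro i _
    rw [if_neg]
    have := i.2
    omega

lemma siegel_prod (G Q l Xb : ℕ) (hG : 2 ≤ G) (hQ : 1 ≤ Q) (hX : Xb + 1 = G^5 * Q^(13*l)) :
    ∏ k ∈ Finset.range (5*l), ((G * Q^k) * Xb + 1) < (Xb + 1)^(3 * (2 * l + 1)) := by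
  have h1 : ∏ k ∈ Finset.range (5*l), ((G * Q^k) * Xb + 1)
      ≤ ∏ k ∈ Finset.range (5*l), ((G * (Xb + 1)) * Q^k) := by
    refine Finset.prod_le_prod' fun k _ => ?_
    have : 1 ≤ G * Q^k := Nat.mul_pos (by omega) (Nat.pow_pos (by omega))
    nlinarith
  have h2 : ∑ k ∈ Finset.range (5*l), k ≤ 13 * l * l := by
    have := Finset.sum_range_id_mul_two (5*l)
    have h3 : 5 * l * (5 * l - 1) ≤ 5 * l * (5 * l) := Nat.mul_le_mul_left _ (by omega)
    nlinarith
  have h3 : ∏ k ∈ Finset.range (5*l), ((G * (Xb + 1)) * Q^k) ≤ (Xb+1)^(6*l) := by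
    rw [Finset.prod_mul_distrib, Finset.prod_pow_eq_pow_sum, Finset.prod_const, Finset.card_range]
    calc (G * (Xb+1))^(5*l) * Q^(∑ k ∈ Finset.range (5*l), k)
        ≤ (G * (Xb+1))^(5*l) * Q^(13 * l * l) := Nat.mul_le_mul_left _ (Nat.pow_le_pow_right hQ h2)
      _ = (Xb+1)^(5*l) * (G^5 * Q^(13*l))^l := by
        rw [mul_pow, mul_pow, ← pow_mul, ← pow_mul]; ring
      _ = (Xb+1)^(6*l) := by rw [← hX]; ring
  have h4 : 2 ≤ Xb + 1 := by
    rw [hX]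
    have a1 : 1 ≤ Q^(13*l) := Nat.pow_pos (by omega)
    have a2 : 2^5 ≤ G^5 := Nat.pow_le_pow_left hG 5
    nlinarith
  refine (h1.trans h3).trans_lt ?_
  exact Nat.pow_lt_pow_right (by omega) (by omega)

lemma siegel (g1 g2 : PowerSeries ℤ) (b Q l Xb : ℕ) (hb : 1 ≤ b) (hQ : 1 ≤ Q)
    (hg1 : ∀ k, 0 ≤ PowerSeries.coeff k g1) (hg1' : ∀ k, PowerSeries.coeff k g1 ≤ (b * Q^k : ℕ))
    (hg2 : ∀ k, 0 ≤ PowerSeries.coeff k g2) (hg2' : ∀ k, PowerSeries.coeff k g2 ≤ (b * Q^k : ℕ))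
    (hX : Xb + 1 = (3 * (2 * l + 1) * b)^5 * Q^(13*l)) :
    ∃ A B D : ℤ[X], A.natDegree ≤ 2 * l ∧ B.natDegree ≤ 2 * l ∧ D.natDegree ≤ 2 * l ∧
      ¬ (A = 0 ∧ B = 0 ∧ D = 0) ∧ (∀ k, |A.coeff k| ≤ Xb) ∧ (∀ k, |B.coeff k| ≤ Xb) ∧
      (∀ k, |D.coeff k| ≤ Xb) ∧
      (PowerSeries.X : PowerSeries ℤ)^(5*l) ∣ ((A : PowerSeries ℤ) + (B : PowerSeries ℤ) * g1 + (D : PowerSeries ℤ) * g2) := by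
  let g : Fin 3 → PowerSeries ℤ := ![1, g1, g2]
  have hg : ∀ s k, 0 ≤ PowerSeries.coeff k (g s) ∧ PowerSeries.coeff k (g s) ≤ (b * Q^k : ℕ) := by
    intro s k
    fin_cases s
    · simp only [g, Fin.zero_eta, Matrix.cons_val_zero, PowerSeries.coeff_one]
      split_ifs with h
      · subst h; constructor
        · norm_num
        · simpa using hb
      · simp; positivity
    · exact ⟨hg1 k, hg1' k⟩
    · exact ⟨hg2 k, hg2' k⟩
  have hgX : ∀ s k (i : ℕ), 0 ≤ PowerSeries.coeff k ((PowerSeries.X : PowerSeries ℤ)^i * g s) ∧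
      PowerSeries.coeff k ((PowerSeries.X : PowerSeries ℤ)^i * g s) ≤ (b * Q^k : ℕ) := by
    intro s k i
    rw [PowerSeries.coeff_X_pow_mul']
    split_ifs with h
    · refine ⟨(hg s _).1, (hg s _).2.trans ?_⟩
      exact_mod_cast Nat.mul_le_mul_left b (Nat.pow_le_pow_right hQ (by omega))
    · simp; positivity
  obtain ⟨d, hd0, hdX, hd⟩ := siegel_gen (Fin 3 × Fin (2*l+1)) (5*l) Xb
    (fun k p => (PowerSeries.coeff k ((PowerSeries.X : PowerSeries ℤ)^(p.2:ℕ) * g p.1)).toNat)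
    (fun k => (3 * (2 * l + 1) * b) * Q^k)
    (by
      intro k
      refine (Finset.sum_le_card_nsmul _ _ (b * Q^k) fun p _ => ?_).trans ?_
      · have := (hgX p.1 k p.2).2
        omega
      · simp [Finset.card_univ]; apply le_of_eq; ring)
    (by
      have := siegel_prod (3 * (2 * l + 1) * b) Q l Xb (by nlinarith) hQ hX
      simpa using this)
  let pol : Fin 3 → ℤ[X] := fun s => ∑ i : Fin (2*l+1), monomial (i:ℕ) (d (s, i))
  have hcoef : ∀ s k, (pol s).coeff k = if h : k < 2*l + 1 then d (s, ⟨k, h⟩) else 0 :=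
    fun s k => coeff_sum_monomial (2*l) (fun i => d (s,i)) k
  have hdeg : ∀ s, (pol s).natDegree ≤ 2 * l := by
    intro s
    rw [natDegree_le_iff_coeff_eq_zero]
    intro k hk
    rw [hcoef, dif_neg (by omega)]
  have hbd : ∀ s k, |(pol s).coeff k| ≤ Xb := by
    intro s k
    rw [hcoef]
    split_ifs
    · exact hdX _
    · simp
  refine ⟨pol 0, pol 1, pol 2, hdeg 0, hdeg 1, hdeg 2, ?_, hbd 0, hbd 1, hbd 2, ?_⟩
  · rintro ⟨h0, h1, h2⟩
    apply hd0
    funext ⟨s, i⟩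
    have hs : pol s = 0 := by fin_cases s <;> assumption
    have := hcoef s i
    rw [hs, dif_pos i.2] at this
    simpa using this.symm
  · rw [PowerSeries.X_pow_dvd_iff]
    intro k hk
    have := hd k hk
    rw [Fintype.sum_prod_type, Fin.sum_univ_three] at this
    have e : ∀ s (i : Fin (2*l+1)), (((PowerSeries.coeff k ((PowerSeries.X : PowerSeries ℤ)^(i:ℕ) * g s)).toNat : ℕ) : ℤ)
      = PowerSeries.coeff k ((PowerSeries.X : PowerSeries ℤ)^(i:ℕ) * g s) := fun s i => Int.toNat_of_nonneg (hgX s k i).1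
    simp only [e] at this
    have c := fun s => coeff_sum_mul (2*l) (fun i => d (s,i)) (g s) k
    rw [← c 0, ← c 1, ← c 2, ← map_add, ← map_add] at this
    have g0 : g 0 = 1 := rfl
    rw [g0, mul_one] at this
    exact this

lemma abc_ne (r β1 β2 L S : ℕ) (hr : 2 ≤ r) (h1 : 2 ≤ β1) (h2 : β1 < β2) (A B D : ℤ[X])
    (hA : A.natDegree ≤ L) (hB : B.natDegree ≤ L) (hD : D.natDegree ≤ L)
    (hn : ¬ (A = 0 ∧ B = 0 ∧ D = 0)) (hS : 2 * L + β2 + 1 < S)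
    (hord : PowerSeries.X^S ∣ ((A : PowerSeries ℤ) + (B : PowerSeries ℤ) * gg r β1 + (D : PowerSeries ℤ) * gg r β2)) :
    A ≠ 0 ∧ B ≠ 0 ∧ D ≠ 0 := by
  have e0 : ((qq r β2 : ℤ[X]) : PowerSeries ℤ) * PowerSeries.derivative ℤ 1 = ((0 : ℤ[X]) : PowerSeries ℤ) * 1 := by
    simp
  have e1 := gg_deriv r β2 β1 h2.le
  have e2 := gg_deriv r β2 β2 le_rfl
  have hq := qq_natDegree r β2
  have hv1 := vv_natDegree r β2 β1
  have hv2 := vv_natDegree r β2 β2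
  refine ⟨?_, ?_, ?_⟩
  · intro h0
    rw [h0, Polynomial.coe_zero, zero_add] at hord
    have := pair _ _ _ B D _ _ e1 e2 (gg_const _ _) (gg_const _ _) L β2 S hB hD hq hv1 hv2 hS hord
      _ _ (qq_fac r β2 β1 hr (by omega) h2) (by
        intro m
        rw [Polynomial.map_sub, eval_sub, vv_eval r β2 β1 β1 hr (by omega) h2,
          vv_eval r β2 β2 β1 hr (by omega) h2, if_pos h2, if_neg (lt_irrefl _), sub_zero]
        exact hv_aux r β2 β1 hr (by omega) m)
    exact hn ⟨h0, this.1, this.2⟩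
  · intro h0
    rw [h0, Polynomial.coe_zero, zero_mul, add_zero, ← mul_one (A : PowerSeries ℤ)] at hord
    have := pair _ _ _ A D _ _ e0 e2 (map_one _) (gg_const _ _) L β2 S hA hD hq (by simp) hv2 hS hord
      _ _ (qq_fac r β2 1 hr (by omega) (by omega)) (by
        intro m
        rw [sub_zero, vv_eval r β2 β2 1 hr (by omega) (by omega), if_pos (by omega)]
        exact hv_aux r β2 1 hr (by omega) m)
    exact hn ⟨this.1, h0, this.2⟩
  · intro h0
    rw [h0, Polynomial.coe_zero, zero_mul, add_zero, ← mul_one (A : PowerSeries ℤ)] at hord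
    have := pair _ _ _ A B _ _ e0 e1 (map_one _) (gg_const _ _) L β2 S hA hB hq (by simp) hv1 hS hord
      _ _ (qq_fac r β2 1 hr (by omega) (by omega)) (by
        intro m
        rw [sub_zero, vv_eval r β2 β1 1 hr (by omega) (by omega), if_pos (by omega)]
        exact hv_aux r β2 1 hr (by omega) m)
    exact hn ⟨this.1, this.2, h0⟩

end FS

namespace FS
open Polynomial

/-- real coefficient of an integral power series -/
noncomputable def rc (f : PowerSeries ℤ) (k : ℕ) : ℝ := ((PowerSeries.coeff k f : ℤ) : ℝ)

lemma rc_add (f g : PowerSeries ℤ) (k : ℕ) : rc (f + g) k = rc f k + rc g k := by simp [rc]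

lemma rc_mul (f g : PowerSeries ℤ) (k : ℕ) :
    rc (f * g) k = ∑ p ∈ Finset.HasAntidiagonal.antidiagonal k, rc f p.1 * rc g p.2 := by
  simp [rc, PowerSeries.coeff_mul]

lemma geo_mul (f g : PowerSeries ℤ) (a b Q : ℝ) (ha : 0 ≤ a) (hQ : 0 ≤ Q)
    (hf : ∀ k, |rc f k| ≤ a * (Q/2)^k) (hg : ∀ k, |rc g k| ≤ b * Q^k) (k : ℕ) :
    |rc (f * g) k| ≤ 2 * a * b * Q^k := by
  have hb : 0 ≤ b := by simpa using (abs_nonneg _).trans (hg 0)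
  rw [rc_mul]
  calc |∑ p ∈ Finset.HasAntidiagonal.antidiagonal k, rc f p.1 * rc g p.2|
      ≤ ∑ p ∈ Finset.HasAntidiagonal.antidiagonal k, |rc f p.1 * rc g p.2| := Finset.abs_sum_le_sum_abs _ _
    _ ≤ ∑ p ∈ Finset.HasAntidiagonal.antidiagonal k, (a * b * Q^k) * (1/2)^p.1 := by
        refine Finset.sum_le_sum fun p hp => ?_
        rw [abs_mul]
        have h1 := mul_le_mul (hf p.1) (hg p.2) (abs_nonneg _) (by positivity)
        refine h1.trans (le_of_eq ?_)
        rw [← Finset.HasAntidiagonal.mem_antidiagonal.mp hp, pow_add, div_pow, div_pow, one_pow]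
        ring
    _ = (a * b * Q^k) * ∑ i ∈ Finset.range (k+1), (1/2:ℝ)^i := by
        rw [← Finset.mul_sum, Finset.Nat.sum_antidiagonal_eq_sum_range_succ_mk]
    _ ≤ (a * b * Q^k) * 2 := by
        refine mul_le_mul_of_nonneg_left ?_ (by positivity)
        exact sum_geometric_two_le _
    _ = _ := by ring

lemma gg_nonneg (r b k : ℕ) : 0 ≤ PowerSeries.coeff k (gg r b) := by
  induction b generalizing k with
  | zero => simp only [gg, Finset.range_zero, Finset.prod_empty, PowerSeries.coeff_one]; split_ifs <;> simp
  | succ b ih =>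
    have h1 : gg r (b+1) = gg r b * hh r b := by simp [gg, Finset.prod_range_succ]
    rw [h1, PowerSeries.coeff_mul]
    refine Finset.sum_nonneg fun p _ => mul_nonneg (ih _) ?_
    simp only [hh, PowerSeries.coeff_mk]
    positivity

lemma gg_bound (r b M : ℕ) (hr : 1 ≤ r) (hb : b ≤ M) (k : ℕ) :
    |rc (gg r b) k| ≤ 2^b * (2 * (r:ℝ)^2 * M)^k := by
  induction b generalizing k with
  | zero =>
    simp only [gg, Finset.range_zero, Finset.prod_empty, rc, PowerSeries.coeff_one]
    split_ifs with h
    · simp [h]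
    · simp; positivity
  | succ b ih =>
    have h1 : gg r (b+1) = hh r b * gg r b := by simp [gg, Finset.prod_range_succ, mul_comm]
    rw [h1]
    have := geo_mul (hh r b) (gg r b) 1 (2^b) (2 * (r:ℝ)^2 * M) (by norm_num) (by positivity)
      (by
        intro k
        have : rc (hh r b) k = (hc r k : ℝ) * (b:ℝ)^k := by simp [rc, hh]
        rw [this, abs_of_nonneg (by positivity), one_mul]
        have h2 : (hc r k : ℝ) ≤ ((r:ℝ)^2)^k := by exact_mod_cast hc_le r hr k
        have h3 : (b:ℝ)^k ≤ (M:ℝ)^k := by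
          gcongr; omega
        calc (hc r k : ℝ) * (b:ℝ)^k ≤ ((r:ℝ)^2)^k * (M:ℝ)^k := by gcongr
          _ = _ := by rw [← mul_pow]; congr 1; ring)
      (fun k => ih (by omega) k) k
    refine this.trans (le_of_eq ?_)
    ring

/-- coefficient growth -/
def Bd (Q b : ℝ) (t : ℕ) (f : PowerSeries ℤ) : Prop :=
  ∀ k, |rc f k| ≤ b * ((k+1).ascFactorial t : ℕ) * Q^k

lemma Bd.mono {Q b b' : ℝ} {t : ℕ} {f : PowerSeries ℤ} (hQ : 0 ≤ Q) (h : Bd Q b t f) (hb : b ≤ b') :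
    Bd Q b' t f := fun k => (h k).trans (by gcongr)

lemma Bd.succ {Q b : ℝ} {t : ℕ} {f : PowerSeries ℤ} (hQ : 0 ≤ Q) (hb : 0 ≤ b) (h : Bd Q b t f) :
    Bd Q b (t+1) f := fun k => (h k).trans (by
      gcongr
      rw [Nat.ascFactorial_succ]
      exact Nat.le_mul_of_pos_left _ (by omega))

lemma Bd.add {Q b b' : ℝ} {t : ℕ} {f g : PowerSeries ℤ} (h : Bd Q b t f) (h' : Bd Q b' t g) :
    Bd Q (b + b') t (f + g) := fun k => by
  rw [rc_add]
  refine (abs_add_le _ _).trans ((add_le_add (h k) (h' k)).trans (le_of_eq ?_))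
  ring

lemma Bd.zero {Q : ℝ} {t : ℕ} : Bd Q 0 t 0 := fun k => by simp [rc]

lemma Bd.sum {Q : ℝ} {t : ℕ} (s : Finset ℕ) (b : ℕ → ℝ) (f : ℕ → PowerSeries ℤ)
    (h : ∀ j ∈ s, Bd Q (b j) t (f j)) : Bd Q (∑ j ∈ s, b j) t (∑ j ∈ s, f j) := by
  induction s using Finset.induction_on with
  | empty => simpa using Bd.zero
  | insert a s ha ih =>
    rw [Finset.sum_insert ha, Finset.sum_insert ha]
    exact (h a (by simp)).add (ih fun j hj => h j (by simp [hj]))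

lemma Bd.C_mul {Q b : ℝ} {t : ℕ} {f : PowerSeries ℤ} (h : Bd Q b t f) (z : ℕ) :
    Bd Q (z * b) t (PowerSeries.C (z:ℤ) * f) := fun k => by
  have : rc (PowerSeries.C (z:ℤ) * f) k = z * rc f k := by
    unfold rc
    rw [PowerSeries.coeff_C_mul]; push_cast; rfl
  rw [this, abs_mul, Nat.abs_cast]
  calc (z:ℝ) * |rc f k| ≤ z * (b * ((k+1).ascFactorial t : ℕ) * Q^k) := by gcongr; exact h k
    _ = _ := by ring

lemma Bd.deriv {Q b : ℝ} {t : ℕ} {f : PowerSeries ℤ} (h : Bd Q b t f) :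
    Bd Q (b * Q) (t+1) (PowerSeries.derivative ℤ f) := fun k => by
  have : rc (PowerSeries.derivative ℤ f) k = rc f (k+1) * (k+1) := by
    simp [rc, PowerSeries.coeff_derivative]
  rw [this, abs_mul, abs_of_nonneg (by positivity : (0:ℝ) ≤ k+1)]
  have h1 := h (k+1)
  have e : (((k+1).ascFactorial (t+1) : ℕ):ℝ) = (k+1) * ((k+1+1).ascFactorial t : ℕ) := by
    have := Nat.succ_ascFactorial (k+1) t
    rw [Nat.ascFactorial_succ]
    exact_mod_cast this.symm
  rw [e]
  calc |rc f (k+1)| * (k+1) ≤ (b * ((k+1+1).ascFactorial t : ℕ) * Q^(k+1)) * (k+1) := by gcongr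
    _ = _ := by ring

lemma asc_mono (a b t : ℕ) (h : a ≤ b) : a.ascFactorial t ≤ b.ascFactorial t := by
  induction t with
  | zero => simp
  | succ t ih => rw [Nat.ascFactorial_succ, Nat.ascFactorial_succ]; exact Nat.mul_le_mul (by omega) ih

lemma Bd.lin_mul {Q b : ℝ} {t : ℕ} {f : PowerSeries ℤ} (hb : 0 ≤ b) (h : Bd Q b t f)
    (r j : ℕ) (hQ : (r:ℝ)^2 * j ≤ Q) : Bd Q (2 * b) t ((lin r j : PowerSeries ℤ) * f) := fun k => by
  have hQ0 : 0 ≤ Q := le_trans (by positivity) hQ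
  have e : rc ((lin r j : PowerSeries ℤ) * f) k
      = rc f k - (r:ℝ)^2 * j * (if k = 0 then 0 else rc f (k-1)) := by
    unfold rc
    rw [coeff_lin_mul]
    push_cast
    split_ifs <;> simp
  rw [e]
  cases k with
  | zero =>
    simp only [if_true, mul_zero, sub_zero]
    refine (h 0).trans ?_
    have : 0 ≤ b * ((0+1).ascFactorial t : ℕ) * Q^0 := by positivity
    nlinarith
  | succ k =>
    simp only [Nat.add_eq_zero_iff, one_ne_zero, and_false, if_false, Nat.add_sub_cancel]
    have h1 := h (k+1)
    have h2 := h k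
    have hm : (((k+1).ascFactorial t:ℕ):ℝ) ≤ ((k+1+1).ascFactorial t:ℕ) := by
      exact_mod_cast asc_mono (k+1) (k+1+1) t (by omega)
    have h3 : (r:ℝ)^2 * j * |rc f k| ≤ b * ((k+1+1).ascFactorial t : ℕ) * Q^(k+1) := by
      calc (r:ℝ)^2 * j * |rc f k| ≤ Q * (b * ((k+1).ascFactorial t : ℕ) * Q^k) := by gcongr
        _ ≤ Q * (b * ((k+1+1).ascFactorial t : ℕ) * Q^k) := by gcongr
        _ = _ := by ring
    calc |rc f (k+1) - (r:ℝ)^2 * j * rc f k| ≤ |rc f (k+1)| + |(r:ℝ)^2 * j * rc f k| := abs_sub _ _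
      _ = |rc f (k+1)| + (r:ℝ)^2 * j * |rc f k| := by
          rw [abs_mul, abs_of_nonneg (by positivity : (0:ℝ) ≤ (r:ℝ)^2 * j)]
      _ ≤ _ := by linarith

lemma Bd.prod_mul {Q b : ℝ} {t : ℕ} {f : PowerSeries ℤ} (hb : 0 ≤ b) (h : Bd Q b t f)
    (r M : ℕ) (hQ : (r:ℝ)^2 * M ≤ Q) (s : Finset ℕ) (hs : ∀ j ∈ s, j ≤ M) :
    Bd Q (2^s.card * b) t (((∏ j ∈ s, lin r j : ℤ[X]) : PowerSeries ℤ) * f) := by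
  induction s using Finset.induction_on with
  | empty => simpa using h
  | insert a s ha ih =>
    rw [Finset.prod_insert ha, Finset.card_insert_of_notMem ha, Polynomial.coe_mul, mul_assoc]
    have h1 := ih fun j hj => hs j (by simp [hj])
    have h2 := h1.lin_mul (by positivity) r a (le_trans (by gcongr; exact_mod_cast hs a (by simp)) hQ)
    rw [pow_succ]
    convert h2 using 1
    ring

noncomputable def Wc (r M : ℕ) : ℝ := 2^M * (2 * (r:ℝ)^2 * M) + M * ((r * M : ℕ) * 2^M)

lemma Wc_nonneg (r M : ℕ) : 0 ≤ Wc r M := by unfold Wc; positivity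

lemma Bd.qq_deriv {b : ℝ} {t : ℕ} {f : PowerSeries ℤ} (hb : 0 ≤ b) (r M β : ℕ) (hβ : β ≤ M)
    (h : Bd (2 * (r:ℝ)^2 * M) b t f) :
    Bd (2 * (r:ℝ)^2 * M) (2^M * (2 * (r:ℝ)^2 * M) * b) (t+1)
      ((qq r β : PowerSeries ℤ) * PowerSeries.derivative ℤ f) := by
  have h1 := (h.deriv).prod_mul (by positivity) r M (by nlinarith [sq_nonneg (r:ℝ), (Nat.cast_nonneg M : (0:ℝ) ≤ M), mul_nonneg (sq_nonneg (r:ℝ)) (Nat.cast_nonneg M : (0:ℝ) ≤ M)]) (Finset.range β)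
    (fun j hj => by simp at hj; omega)
  refine h1.mono (by positivity) ?_
  rw [Finset.card_range]
  have : (2:ℝ)^β ≤ 2^M := by gcongr; norm_num
  calc (2:ℝ)^β * (b * (2 * (r:ℝ)^2 * M)) ≤ 2^M * (b * (2 * (r:ℝ)^2 * M)) := by gcongr
    _ = _ := by ring

lemma Bd.vv_mul {b : ℝ} {t : ℕ} {f : PowerSeries ℤ} (hb : 0 ≤ b) (r M β c : ℕ) (hβ : β ≤ M) (hc : c ≤ M)
    (h : Bd (2 * (r:ℝ)^2 * M) b t f) :
    Bd (2 * (r:ℝ)^2 * M) (M * ((r * M : ℕ) * 2^M) * b) t ((vv r β c : PowerSeries ℤ) * f) := by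
  have e : (vv r β c : PowerSeries ℤ) * f = ∑ j ∈ Finset.range c,
      PowerSeries.C ((r * j : ℕ) : ℤ) * (((∏ i ∈ (Finset.range β).erase j, lin r i : ℤ[X]) : PowerSeries ℤ) * f) := by
    unfold vv
    have h := map_sum (Polynomial.coeToPowerSeries.ringHom (R := ℤ))
      (fun j : ℕ => C ((r:ℤ) * j) * ∏ i ∈ (Finset.range β).erase j, lin r i) (Finset.range c)
    simp only [Polynomial.coeToPowerSeries.ringHom_apply] at h
    rw [h, Finset.sum_mul]
    refine Finset.sum_congr rfl fun j _ => ?_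
    rw [Polynomial.coe_mul, Polynomial.coe_C]
    push_cast
    ring
  rw [e]
  have h1 := Bd.sum (Q := 2 * (r:ℝ)^2 * M) (t := t) (Finset.range c) (fun _ => ((r * M : ℕ) * 2^M) * b) _ (fun j hj => by
    have h2 := (h.prod_mul hb r M (by nlinarith [sq_nonneg (r:ℝ), (Nat.cast_nonneg M : (0:ℝ) ≤ M), mul_nonneg (sq_nonneg (r:ℝ)) (Nat.cast_nonneg M : (0:ℝ) ≤ M)]) ((Finset.range β).erase j)
      (fun i hi => by have := Finset.mem_of_mem_erase hi; simp at this; omega)).C_mul (r * j)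
    refine h2.mono (by positivity) ?_
    have hj' : j ≤ M := by simp at hj; omega
    have : (2:ℝ)^((Finset.range β).erase j).card ≤ 2^M := by
      gcongr
      · norm_num
      · exact Finset.card_erase_le.trans (by simpa using hβ)
    rw [← mul_assoc]
    gcongr)
  refine h1.mono (by positivity) ?_
  rw [Finset.sum_const, Finset.card_range, nsmul_eq_mul]
  have hcM : (c:ℝ) ≤ M := by exact_mod_cast hc
  calc (c:ℝ) * (((r * M : ℕ) * 2^M) * b) ≤ (M:ℝ) * (((r * M : ℕ) * 2^M) * b) := by gcongr
    _ = _ := by ring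

lemma Bd.itn {b : ℝ} {A : ℤ[X]} (hb : 0 ≤ b) (r M β c : ℕ) (hβ : β ≤ M) (hc : c ≤ M)
    (h : Bd (2 * (r:ℝ)^2 * M) b 0 (A : PowerSeries ℤ)) (t : ℕ) :
    Bd (2 * (r:ℝ)^2 * M) (b * Wc r M ^ t) t (itn (qq r β) (vv r β c) A t : PowerSeries ℤ) := by
  have hW := Wc_nonneg r M
  induction t with
  | zero => simpa [itn_zero] using h
  | succ t ih =>
    rw [itn_succ, Polynomial.coe_add, Polynomial.coe_mul, Polynomial.coe_mul, ← PowerSeries.derivative_coe]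
    have h1 := ih.qq_deriv (by positivity) r M β hβ
    have h2 := (ih.vv_mul (by positivity) r M β c hβ hc).succ (by positivity) (by positivity)
    have h3 := h1.add h2
    refine h3.mono (by positivity) (le_of_eq ?_)
    rw [pow_succ]
    conv_rhs => rw [Wc]
    rw [Wc]
    ring

lemma vv_zero (r β : ℕ) : vv r β 0 = 0 := by simp [vv]

/-- evaluation -/
def SA (f : PowerSeries ℤ) (w : ℝ) : Prop := Summable fun k => ‖rc f k * w^k‖
noncomputable def ev (f : PowerSeries ℤ) (w : ℝ) : ℝ := ∑' k, rc f k * w^k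

lemma SA.add {f g : PowerSeries ℤ} {w : ℝ} (hf : SA f w) (hg : SA g w) : SA (f + g) w := by
  unfold SA at *
  refine Summable.of_nonneg_of_le (fun _ => norm_nonneg _) (fun k => ?_) (Summable.add hf hg)
  rw [rc_add, add_mul]
  exact norm_add_le _ _

lemma ev_add {f g : PowerSeries ℤ} {w : ℝ} (hf : SA f w) (hg : SA g w) : ev (f + g) w = ev f w + ev g w := by
  unfold ev
  rw [← Summable.tsum_add (Summable.of_norm hf) (Summable.of_norm hg)]
  congr 1
  funext k
  rw [rc_add, add_mul]

lemma rc_mul_w (f g : PowerSeries ℤ) (w : ℝ) (k : ℕ) : rc (f * g) k * w^k =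
    ∑ p ∈ Finset.HasAntidiagonal.antidiagonal k, (rc f p.1 * w^p.1) * (rc g p.2 * w^p.2) := by
  rw [rc_mul, Finset.sum_mul]
  refine Finset.sum_congr rfl fun p hp => ?_
  rw [← Finset.HasAntidiagonal.mem_antidiagonal.mp hp, pow_add]
  ring

lemma SA.mul {f g : PowerSeries ℤ} {w : ℝ} (hf : SA f w) (hg : SA g w) : SA (f * g) w := by
  have h := summable_norm_sum_mul_antidiagonal_of_summable_norm
    (f := fun k => rc f k * w^k) (g := fun k => rc g k * w^k) hf hg
  unfold SA
  refine h.congr fun k => ?_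
  rw [rc_mul_w]

lemma ev_mul {f g : PowerSeries ℤ} {w : ℝ} (hf : SA f w) (hg : SA g w) : ev (f * g) w = ev f w * ev g w := by
  have h := tsum_mul_tsum_eq_tsum_sum_antidiagonal_of_summable_norm
    (f := fun k => rc f k * w^k) (g := fun k => rc g k * w^k) hf hg
  have e : ev (f * g) w = ∑' k, rc (f * g) k * w^k := rfl
  rw [e, tsum_congr (rc_mul_w f g w)]
  exact h.symm

lemma rc_poly (p : ℤ[X]) (k : ℕ) : rc (p : PowerSeries ℤ) k = ((p.coeff k : ℤ) : ℝ) := by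
  simp [rc]

lemma SA_poly (p : ℤ[X]) (w : ℝ) : SA (p : PowerSeries ℤ) w := by
  unfold SA
  apply summable_of_ne_finset_zero (s := Finset.range (p.natDegree + 1))
  intro k hk
  rw [rc_poly, coeff_eq_zero_of_natDegree_lt (by simpa [Nat.lt_succ_iff] using hk)]
  simp

lemma ev_poly (p : ℤ[X]) (w : ℝ) : ev (p : PowerSeries ℤ) w = (p.map (Int.castRingHom ℝ)).eval w := by
  unfold ev
  rw [tsum_eq_sum (s := Finset.range (p.natDegree + 1))]
  · rw [eval_eq_sum_range' (n := p.natDegree + 1) (Nat.lt_succ_of_le natDegree_map_le)]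
    refine Finset.sum_congr rfl fun k _ => ?_
    rw [rc_poly, coeff_map]; simp
  · intro k hk
    rw [rc_poly, coeff_eq_zero_of_natDegree_lt (by simpa [Nat.lt_succ_iff] using hk)]
    simp

lemma ev_one (w : ℝ) : ev 1 w = 1 := by
  have := ev_poly 1 w
  simpa using this

lemma SA_one (w : ℝ) : SA 1 w := by
  have := SA_poly 1 w
  simpa using this

lemma SA_ev_pow {f : PowerSeries ℤ} {w : ℝ} (hf : SA f w) (r : ℕ) : SA (f^r) w ∧ ev (f^r) w = ev f w ^ r := by
  induction r with
  | zero => simp [SA_one, ev_one]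
  | succ r ih =>
    rw [pow_succ]
    refine ⟨ih.1.mul hf, ?_⟩
    rw [ev_mul ih.1 hf, ih.2, pow_succ]

lemma Bd.eval {Q b w : ℝ} {t S : ℕ} {f : PowerSeries ℤ} (hQ : 0 ≤ Q) (hb : 0 ≤ b) (h : Bd Q b t f)
    (hw : 0 ≤ w) (hQw : 4 * (Q * w) ≤ 1) (hS : PowerSeries.X^S ∣ f) :
    SA f w ∧ |ev f w| ≤ 2 * (b * t ! * 2^t) * (4 * (Q * w))^S := by
  set K := b * t ! * 2^t with hK
  have hK0 : 0 ≤ K := by positivity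
  have bound : ∀ k, ‖rc f k * w^k‖ ≤ K * (4 * (Q * w))^S * (1/2)^k := by
    intro k
    by_cases hk : k < S
    · have : rc f k = 0 := by
        rw [PowerSeries.X_pow_dvd_iff] at hS
        simp [rc, hS k hk]
      rw [this]
      simp only [zero_mul, norm_zero]
      positivity
    · push Not at hk
      have h1 : (((k+1).ascFactorial t : ℕ) : ℝ) ≤ t ! * 2^t * 2^k := by
        rw [Nat.ascFactorial_eq_factorial_mul_choose]
        have : (k + t).choose t ≤ 2^(k+t) := Nat.choose_le_two_pow _ _
        have h2 : (((k + t).choose t : ℕ):ℝ) ≤ 2^t * 2^k := by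
          rw [← pow_add, add_comm t k]; exact_mod_cast this
        push_cast
        rw [mul_assoc]
        gcongr
      rw [norm_mul, Real.norm_eq_abs, Real.norm_eq_abs, abs_of_nonneg (by positivity : 0 ≤ w^k)]
      have h3 : (4 * (Q * w))^k ≤ (4 * (Q * w))^S := pow_le_pow_of_le_one (by positivity) hQw hk
      calc |rc f k| * w^k ≤ (b * ((k+1).ascFactorial t : ℕ) * Q^k) * w^k := by gcongr; exact h k
        _ ≤ (b * (t ! * 2^t * 2^k) * Q^k) * w^k := by gcongr
        _ = K * (4 * (Q * w))^k * (1/2)^k := by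
            have : (4:ℝ)^k = 2^k * 2^k := by rw [← mul_pow]; norm_num
            rw [hK, mul_pow, mul_pow, this, div_pow, one_pow]
            field_simp
        _ ≤ _ := by gcongr
  have hs : HasSum (fun k => K * (4 * (Q * w))^S * (1/2:ℝ)^k) (K * (4 * (Q * w))^S * 2) :=
    hasSum_geometric_two.mul_left _
  refine ⟨Summable.of_nonneg_of_le (fun _ => norm_nonneg _) bound hs.summable, ?_⟩
  have := tsum_of_norm_bounded hs bound
  rw [Real.norm_eq_abs] at this
  unfold ev
  linarith

end FS

namespace FS
open Polynomial

lemma exists_forms (r M β1 β2 l Xb : ℕ) (hr : 2 ≤ r) (h1 : r ≤ β1) (h2 : β1 < β2) (h3 : β2 ≤ M)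
    (hl : M + 1 < l) (hX : Xb + 1 = (3 * (2 * l + 1) * 2^M)^5 * (2 * r^2 * M)^(13*l)) :
    ∃ A B D : ℤ[X], A.natDegree ≤ 2 * l ∧ B.natDegree ≤ 2 * l ∧ D.natDegree ≤ 2 * l ∧
      (A ≠ 0 ∧ B ≠ 0 ∧ D ≠ 0) ∧ (∀ k, |A.coeff k| ≤ Xb) ∧ (∀ k, |B.coeff k| ≤ Xb) ∧
      (∀ k, |D.coeff k| ≤ Xb) ∧
      (PowerSeries.X : PowerSeries ℤ)^(5*l) ∣ ((A : PowerSeries ℤ) + (B : PowerSeries ℤ) * gg r β1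
        + (D : PowerSeries ℤ) * gg r β2) := by
  have hg : ∀ b ≤ M, ∀ k, PowerSeries.coeff k (gg r b) ≤ ((2^M * (2 * r^2 * M)^k : ℕ) : ℤ) := by
    intro b hb k
    have := gg_bound r b M (by omega) hb k
    have h4 : rc (gg r b) k ≤ 2^M * (2 * (r:ℝ)^2 * M)^k := by
      refine (le_abs_self _).trans (this.trans ?_)
      gcongr
      norm_num
    unfold rc at h4
    exact_mod_cast h4
  have hQ : 1 ≤ 2 * r^2 * M := by
    have : 0 < 2 * r^2 * M := by
      have : 0 < M := by omega
      positivity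
    omega
  obtain ⟨A, B, D, hA, hB, hD, hn, cA, cB, cD, hd⟩ := siegel (gg r β1) (gg r β2) (2^M) (2 * r^2 * M) l Xb
    Nat.one_le_two_pow hQ (gg_nonneg r β1) (hg β1 (by omega)) (gg_nonneg r β2) (hg β2 h3) hX
  exact ⟨A, B, D, hA, hB, hD, abc_ne r β1 β2 (2*l) (5*l) hr (by omega) h2 A B D hA hB hD hn (by omega) hd,
    cA, cB, cD, hd⟩

noncomputable def RR (r β1 β2 : ℕ) (A B D : ℤ[X]) (t : ℕ) : PowerSeries ℤ :=
  (itn (qq r β2) 0 A t : PowerSeries ℤ) + (itn (qq r β2) (vv r β2 β1) B t : PowerSeries ℤ) * gg r β1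
    + (itn (qq r β2) (vv r β2 β2) D t : PowerSeries ℤ) * gg r β2

lemma RR_succ (r β1 β2 : ℕ) (h2 : β1 < β2) (A B D : ℤ[X]) (t : ℕ) :
    RR r β1 β2 A B D (t+1) = (qq r β2 : PowerSeries ℤ) * PowerSeries.derivative ℤ (RR r β1 β2 A B D t) := by
  have e1 := gg_deriv r β2 β1 h2.le
  have e2 := gg_deriv r β2 β2 le_rfl
  unfold RR
  simp only [itn_succ, Polynomial.coe_add, Polynomial.coe_mul, ← PowerSeries.derivative_coe, map_add,
    Derivation.leibniz, smul_eq_mul, Polynomial.coe_zero]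
  linear_combination (-(itn (qq r β2) (vv r β2 β1) B t : PowerSeries ℤ)) * e1
    + (-(itn (qq r β2) (vv r β2 β2) D t : PowerSeries ℤ)) * e2

lemma RR_dvd (r β1 β2 : ℕ) (h2 : β1 < β2) (A B D : ℤ[X]) (S : ℕ)
    (h : (PowerSeries.X : PowerSeries ℤ)^S ∣ RR r β1 β2 A B D 0) (t : ℕ) :
    (PowerSeries.X : PowerSeries ℤ)^(S-t) ∣ RR r β1 β2 A B D t := by
  induction t with
  | zero => simpa using h
  | succ t ih =>
    rw [RR_succ r β1 β2 h2]
    exact Dvd.dvd.mul_left (X_pow_dvd_deriv _ _ ih) _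

lemma RR_Bd (r M β1 β2 : ℕ) (h2 : β1 < β2) (h3 : β2 ≤ M) (A B D : ℤ[X]) (b : ℝ) (hb : 0 ≤ b)
    (h : Bd (2 * (r:ℝ)^2 * M) b 0 (RR r β1 β2 A B D 0)) (t : ℕ) :
    Bd (2 * (r:ℝ)^2 * M) (b * Wc r M ^ t) t (RR r β1 β2 A B D t) := by
  have hW := Wc_nonneg r M
  induction t with
  | zero => simpa using h
  | succ t ih =>
    rw [RR_succ r β1 β2 h2]
    refine (ih.qq_deriv (by positivity) r M β2 h3).mono (by positivity) ?_
    have : (2:ℝ)^M * (2 * (r:ℝ)^2 * M) ≤ Wc r M := by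
      unfold Wc
      have : (0:ℝ) ≤ M * ((r * M : ℕ) * 2^M) := by positivity
      linarith
    calc (2:ℝ)^M * (2 * (r:ℝ)^2 * M) * (b * Wc r M ^ t) ≤ Wc r M * (b * Wc r M ^ t) := by gcongr
      _ = _ := by ring

lemma poly_Bd (A : ℤ[X]) (Xb : ℕ) (hA : ∀ k, |A.coeff k| ≤ Xb) (Q : ℝ) (hQ : 1 ≤ Q) :
    Bd Q Xb 0 (A : PowerSeries ℤ) := by
  intro k
  rw [rc_poly]
  have : |((A.coeff k : ℤ):ℝ)| ≤ Xb := by exact_mod_cast hA k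
  have h2 : (1:ℝ) ≤ Q^k := one_le_pow₀ hQ
  simp only [Nat.ascFactorial_zero, Nat.cast_one, mul_one]
  nlinarith [(Nat.cast_nonneg Xb : (0:ℝ) ≤ Xb)]

lemma RR_Bd0 (r M β1 β2 : ℕ) (hr : 2 ≤ r) (hM : 1 ≤ M) (h2 : β1 < β2) (h3 : β2 ≤ M) (A B D : ℤ[X]) (Xb : ℕ)
    (cA : ∀ k, |A.coeff k| ≤ Xb) (cB : ∀ k, |B.coeff k| ≤ Xb) (cD : ∀ k, |D.coeff k| ≤ Xb) :
    Bd (2 * (r:ℝ)^2 * M) (5 * 2^M * Xb) 0 (RR r β1 β2 A B D 0) := by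
  have hr' : (2:ℝ) ≤ r := by exact_mod_cast hr
  have hM' : (1:ℝ) ≤ M := by exact_mod_cast hM
  have hQ : (1:ℝ) ≤ (r:ℝ)^2 * M := by nlinarith
  have hg : ∀ b ≤ M, ∀ B : ℤ[X], (∀ k, |B.coeff k| ≤ Xb) →
      Bd (2 * (r:ℝ)^2 * M) (2 * Xb * 2^M) 0 ((B : PowerSeries ℤ) * gg r b) := by
    intro b hb B cB k
    simp only [Nat.ascFactorial_zero, Nat.cast_one, mul_one]
    refine geo_mul _ _ _ _ _ (by positivity) (by positivity) ?_ ?_ k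
    · intro k
      have := poly_Bd B Xb cB ((r:ℝ)^2 * M) hQ k
      simp only [Nat.ascFactorial_zero, Nat.cast_one, mul_one] at this
      have e : 2 * (r:ℝ)^2 * M / 2 = (r:ℝ)^2 * M := by ring
      rw [e]
      exact this
    · intro k
      refine (gg_bound r b M (by omega) hb k).trans ?_
      gcongr
      norm_num
  have h := ((poly_Bd A Xb cA (2 * (r:ℝ)^2 * M) (by linarith)).add (hg β1 (by omega) B cB)).add (hg β2 h3 D cD)
  refine Bd.mono (by positivity) h ?_
  have : (1:ℝ) ≤ 2^M := one_le_pow₀ (by norm_num)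
  nlinarith [(Nat.cast_nonneg Xb : (0:ℝ) ≤ Xb), mul_nonneg (Nat.cast_nonneg Xb : (0:ℝ) ≤ Xb) (sub_nonneg.mpr this)]

lemma SA_gg (r b M : ℕ) (hr : 1 ≤ r) (hb : b ≤ M) (w : ℝ) (hw : 0 ≤ w) (hQw : 4 * (2 * (r:ℝ)^2 * M * w) ≤ 1) :
    SA (gg r b) w := by
  have h : Bd (2 * (r:ℝ)^2 * M) (2^b) 0 (gg r b) := by
    intro k
    simpa using gg_bound r b M hr hb k
  exact (h.eval (S := 0) (by positivity) (by positivity) hw hQw (by simp)).1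

/-- real value of an integral polynomial -/
noncomputable def pe (p : ℤ[X]) (w : ℝ) : ℝ := (p.map (Int.castRingHom ℝ)).eval w

lemma form_bound (r M β1 β2 : ℕ) (hr : 2 ≤ r) (hM : 1 ≤ M) (h2 : β1 < β2) (h3 : β2 ≤ M) (A B D : ℤ[X]) (Xb S : ℕ)
    (cA : ∀ k, |A.coeff k| ≤ Xb) (cB : ∀ k, |B.coeff k| ≤ Xb) (cD : ∀ k, |D.coeff k| ≤ Xb)
    (hS : (PowerSeries.X : PowerSeries ℤ)^S ∣ RR r β1 β2 A B D 0)
    (w : ℝ) (hw : 0 ≤ w) (hQw : 4 * (2 * (r:ℝ)^2 * M * w) ≤ 1) (y0 y1 y2 T0 δ : ℝ) (hT : 0 ≤ T0)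
    (d0 : |y0 - T0| ≤ δ) (d1 : |y1 - T0 * ev (gg r β1) w| ≤ δ) (d2 : |y2 - T0 * ev (gg r β2) w| ≤ δ) (t : ℕ) :
    |pe (itn (qq r β2) 0 A t) w * y0 + pe (itn (qq r β2) (vv r β2 β1) B t) w * y1
      + pe (itn (qq r β2) (vv r β2 β2) D t) w * y2| ≤
      2 * (Xb * Wc r M ^ t * t ! * 2^t) * (T0 * (5 * 2^M) * (4 * (2 * (r:ℝ)^2 * M * w))^(S-t) + 3 * δ) := by
  have hr' : (2:ℝ) ≤ r := by exact_mod_cast hr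
  have hM' : (1:ℝ) ≤ M := by exact_mod_cast hM
  have hQ : (1:ℝ) ≤ 2 * (r:ℝ)^2 * M := by nlinarith
  have hW := Wc_nonneg r M
  have hδ : 0 ≤ δ := (abs_nonneg _).trans d0
  have g1 := SA_gg r β1 M (by omega) (by omega) w hw hQw
  have g2 := SA_gg r β2 M (by omega) h3 w hw hQw
  set K : ℝ := 2 * (Xb * Wc r M ^ t * t ! * 2^t) with hK
  have hK0 : 0 ≤ K := by positivity
  have pb : ∀ c ≤ M, ∀ A : ℤ[X], (∀ k, |A.coeff k| ≤ Xb) → |pe (itn (qq r β2) (vv r β2 c) A t) w| ≤ K := by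
    intro c hc A cA
    have := ((poly_Bd A Xb cA _ hQ).itn (by positivity) r M β2 c h3 hc t).eval (S := 0) (by positivity)
      (by positivity) hw hQw (by simp)
    have h4 := this.2
    rw [ev_poly] at h4
    simpa [pe, hK, mul_assoc] using h4
  have a0 := pb 0 (by omega) A cA
  rw [vv_zero] at a0
  have a1 := pb β1 (by omega) B cB
  have a2 := pb β2 h3 D cD
  have hR := (RR_Bd r M β1 β2 h2 h3 A B D _ (by positivity)
    (RR_Bd0 r M β1 β2 hr hM h2 h3 A B D Xb cA cB cD) t).eval (by positivity) (by positivity) hw hQw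
    (RR_dvd r β1 β2 h2 A B D S hS t)
  have eR : ev (RR r β1 β2 A B D t) w = pe (itn (qq r β2) 0 A t) w
      + pe (itn (qq r β2) (vv r β2 β1) B t) w * ev (gg r β1) w
      + pe (itn (qq r β2) (vv r β2 β2) D t) w * ev (gg r β2) w := by
    unfold RR
    rw [ev_add ((SA_poly _ _).add ((SA_poly _ _).mul g1)) ((SA_poly _ _).mul g2),
      ev_add (SA_poly _ _) ((SA_poly _ _).mul g1), ev_mul (SA_poly _ _) g1, ev_mul (SA_poly _ _) g2,
      ev_poly, ev_poly, ev_poly]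
    rfl
  have hR2 := hR.2
  set a := pe (itn (qq r β2) 0 A t) w
  set b := pe (itn (qq r β2) (vv r β2 β1) B t) w
  set c := pe (itn (qq r β2) (vv r β2 β2) D t) w
  have e : a * y0 + b * y1 + c * y2 = T0 * ev (RR r β1 β2 A B D t) w + a * (y0 - T0)
      + b * (y1 - T0 * ev (gg r β1) w) + c * (y2 - T0 * ev (gg r β2) w) := by
    rw [eR]; ring
  rw [e]
  have m0 : |a * (y0 - T0)| ≤ K * δ := by rw [abs_mul]; gcongr
  have m1 : |b * (y1 - T0 * ev (gg r β1) w)| ≤ K * δ := by rw [abs_mul]; gcongr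
  have m2 : |c * (y2 - T0 * ev (gg r β2) w)| ≤ K * δ := by rw [abs_mul]; gcongr
  have m3 : |T0 * ev (RR r β1 β2 A B D t) w| ≤ T0 * (K * (5 * 2^M) * (4 * (2 * (r:ℝ)^2 * M * w))^(S-t)) := by
    rw [abs_mul, abs_of_nonneg hT]
    refine mul_le_mul_of_nonneg_left (hR2.trans (le_of_eq ?_)) hT
    rw [hK]; ring
  have t1 := abs_add_le (T0 * ev (RR r β1 β2 A B D t) w + a * (y0 - T0)
      + b * (y1 - T0 * ev (gg r β1) w)) (c * (y2 - T0 * ev (gg r β2) w))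
  have t2 := abs_add_le (T0 * ev (RR r β1 β2 A B D t) w + a * (y0 - T0)) (b * (y1 - T0 * ev (gg r β1) w))
  have t3 := abs_add_le (T0 * ev (RR r β1 β2 A B D t) w) (a * (y0 - T0))
  calc _ ≤ T0 * (K * (5 * 2^M) * (4 * (2 * (r:ℝ)^2 * M * w))^(S-t)) + K * δ + K * δ + K * δ := by linarith
    _ = _ := by ring

lemma int_form (p : ℤ[X]) (d K : ℕ) (hK : 1 ≤ K) (hp : p.natDegree ≤ d) :
    ∃ z : ℤ, (K:ℝ)^d * pe p (1 / K) = z := by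
  refine ⟨∑ i ∈ Finset.range (d+1), p.coeff i * (K:ℤ)^(d-i), ?_⟩
  unfold pe
  rw [eval_eq_sum_range' (n := d + 1) (Nat.lt_succ_of_le (natDegree_map_le.trans hp)), Finset.mul_sum]
  push_cast
  refine Finset.sum_congr rfl fun i hi => ?_
  have hi' : i ≤ d := by simp at hi; omega
  have hK0 : (K:ℝ) ≠ 0 := by positivity
  obtain ⟨e, rfl⟩ := Nat.exists_eq_add_of_le hi'
  rw [coeff_map, Nat.add_sub_cancel_left, pow_add, one_div, inv_pow]
  simp only [eq_intCast]
  field_simp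

lemma core (r M β1 β2 l Xb T : ℕ) (s : Finset ℕ) (hr : 2 ≤ r) (h1 : r ≤ β1) (h2 : β1 < β2) (h3 : β2 ≤ M)
    (hl : M + 1 < l) (hX : Xb + 1 = (3 * (2 * l + 1) * 2^M)^5 * (2 * r^2 * M)^(13*l))
    (T0 δ : ℕ → ℝ)
    (hs : ∀ n ∈ s, 8 * M ≤ n ∧ 0 ≤ T0 n ∧ (∃ y0 y1 y2 : ℤ, y0 ≠ 0 ∧ |(y0:ℝ) - T0 n| ≤ δ n ∧
      |(y1:ℝ) - T0 n * ev (gg r β1) (1 / ((r^2 * n : ℕ):ℝ))| ≤ δ n ∧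
      |(y2:ℝ) - T0 n * ev (gg r β2) (1 / ((r^2 * n : ℕ):ℝ))| ≤ δ n) ∧
      ∀ t ≤ T + 2, ((r^2 * n : ℕ):ℝ)^(2*l + t*M) * (2 * (Xb * Wc r M ^ t * t ! * 2^t) *
        (T0 n * (5 * 2^M) * (8 * M / n)^(5*l-t) + 3 * δ n)) < 1) :
    s.card * (T + 1) ≤ 6 * l + 3 * M := by
  obtain ⟨A, B, D, hA, hB, hD, ⟨nA, nB, nD⟩, cA, cB, cD, hd⟩ := exists_forms r M β1 β2 l Xb hr h1 h2 h3 hl hX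
  have hM : 1 ≤ M := by omega
  have inj : Function.Injective (Int.castRingHom ℝ) := (Int.castRingHom ℝ).injective_int
  set ι := Int.castRingHom ℝ with hι
  have hne : dt ((qq r β2).map ι) ((vv r β2 β1).map ι) ((vv r β2 β2).map ι) (A.map ι) (B.map ι) (D.map ι) 0 1 2 ≠ 0 := by
    refine dt_ne_zero _ _ _ _ _ _ _ _ _ _ (qq_fac r β2 1 hr (by omega) (by omega))
      (qq_fac r β2 β1 hr (by omega) h2) ?_ ?_ ?_
      ((Polynomial.map_ne_zero_iff inj).mpr nA) ((Polynomial.map_ne_zero_iff inj).mpr nB)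
      ((Polynomial.map_ne_zero_iff inj).mpr nD)
    · intro m
      rw [vv_eval r β2 β1 1 hr (by omega) (by omega), if_pos (by omega)]
      exact hv_aux r β2 1 hr (by omega) m
    · intro m
      rw [vv_eval r β2 β2 1 hr (by omega) (by omega), if_pos (by omega)]
      exact hv_aux r β2 1 hr (by omega) m
    · intro m
      rw [eval_sub, vv_eval r β2 β1 β1 hr (by omega) h2,
          vv_eval r β2 β2 β1 hr (by omega) h2, if_pos h2, if_neg (lt_irrefl _), sub_zero]
      exact hv_aux r β2 β1 hr (by omega) m
  have hdeg := dt_natDegree ((qq r β2).map ι) ((vv r β2 β1).map ι) ((vv r β2 β2).map ι) (A.map ι) (B.map ι) (D.map ι)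
    (2*l) M (natDegree_map_le.trans hA) (natDegree_map_le.trans hB) (natDegree_map_le.trans hD)
    (natDegree_map_le.trans ((qq_natDegree r β2).trans h3)) (natDegree_map_le.trans ((vv_natDegree r β2 β1).trans h3))
    (natDegree_map_le.trans ((vv_natDegree r β2 β2).trans h3))
  have hpos : ∀ n ∈ s, 0 < r^2 * n := by
    intro n hn
    have := (hs n hn).1
    have : 0 < n := by omega
    positivity
  have hsum := sum_mult_le _ hne (s.image fun n : ℕ => (1:ℝ) / ((r^2 * n : ℕ):ℝ)) (T+1) (by
    intro w hw
    obtain ⟨n, hn, rfl⟩ := Finset.mem_image.mp hw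
    obtain ⟨hn8, hT0, ⟨y0, y1, y2, hy, d0, d1, d2⟩, hsm⟩ := hs n hn
    have hn0 : 0 < n := by omega
    have hrn := hpos n hn
    set w : ℝ := 1 / ((r^2 * n : ℕ):ℝ) with hw
    have hw0 : 0 ≤ w := by positivity
    have hr0 : (r:ℝ) ≠ 0 := by positivity
    have hnr : (0:ℝ) < n := by exact_mod_cast hn0
    have eQ : 4 * (2 * (r:ℝ)^2 * M * w) = 8 * M / n := by
      rw [hw]; push_cast; field_simp; norm_num
    have hQw : 4 * (2 * (r:ℝ)^2 * M * w) ≤ 1 := by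
      rw [eQ, div_le_one hnr]; exact_mod_cast hn8
    refine dt_dvd _ _ _ _ _ _ w ?_ y0 y1 y2 (by exact_mod_cast hy) (T+2) ?_ T 0 1 2 (by omega) (by omega) (by omega)
    · unfold qq
      rw [Polynomial.map_prod, eval_prod, Finset.prod_ne_zero_iff]
      intro j hj
      rw [eval_lin, hw]
      have hj' : j < n := by simp at hj; omega
      have hj2 : (j:ℝ) < n := by exact_mod_cast hj'
      have : (r:ℝ)^2 * j * (1 / ((r^2 * n : ℕ):ℝ)) = j / n := by push_cast; field_simp
      rw [this]
      have : (j:ℝ) / n < 1 := (div_lt_one hnr).mpr hj2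
      linarith
    · intro t ht
      have hb := form_bound r M β1 β2 hr hM h2 h3 A B D Xb (5*l) cA cB cD (by simpa [RR, itn_zero] using hd) w hw0 hQw
        y0 y1 y2 (T0 n) (δ n) hT0 d0 d1 d2 t
      rw [eQ] at hb
      have hlt := hsm t ht
      obtain ⟨z0, hz0⟩ := int_form (itn (qq r β2) 0 A t) (2*l+t*M) (r^2*n) hrn
        (itn_natDegree _ _ _ _ _ hA ((qq_natDegree r β2).trans h3) (by simp) t)
      obtain ⟨z1, hz1⟩ := int_form (itn (qq r β2) (vv r β2 β1) B t) (2*l+t*M) (r^2*n) hrn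
        (itn_natDegree _ _ _ _ _ hB ((qq_natDegree r β2).trans h3) ((vv_natDegree r β2 β1).trans h3) t)
      obtain ⟨z2, hz2⟩ := int_form (itn (qq r β2) (vv r β2 β2) D t) (2*l+t*M) (r^2*n) hrn
        (itn_natDegree _ _ _ _ _ hD ((qq_natDegree r β2).trans h3) ((vv_natDegree r β2 β2).trans h3) t)
      rw [← hw] at hz0 hz1 hz2
      set F := pe (itn (qq r β2) 0 A t) w * y0 + pe (itn (qq r β2) (vv r β2 β1) B t) w * y1
        + pe (itn (qq r β2) (vv r β2 β2) D t) w * y2 with hF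
      set KK := ((r^2 * n : ℕ):ℝ)^(2*l + t*M) with hKK
      have hKK0 : 0 < KK := by positivity
      have hFz : KK * F = ((z0 * y0 + z1 * y1 + z2 * y2 : ℤ):ℝ) := by
        push_cast
        rw [hF, ← hz0, ← hz1, ← hz2]; ring
      have hFl : |KK * F| < 1 := by
        rw [abs_mul, abs_of_pos hKK0]
        exact (mul_le_mul_of_nonneg_left hb hKK0.le).trans_lt hlt
      rw [hFz] at hFl
      have hz : z0 * y0 + z1 * y1 + z2 * y2 = 0 := by
        rw [← Int.abs_lt_one_iff]; exact_mod_cast hFl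
      rw [hz] at hFz
      have hF0 : F = 0 := by
        have : KK * F = 0 := by simpa using hFz
        rcases mul_eq_zero.mp this with h | h
        · exact absurd h hKK0.ne'
        · exact h
      have i0 := itn_map ι (qq r β2) 0 A t
      have i1 := itn_map ι (qq r β2) (vv r β2 β1) B t
      have i2 := itn_map ι (qq r β2) (vv r β2 β2) D t
      rw [Polynomial.map_zero] at i0
      rw [← i0, ← i1, ← i2]
      exact hF0)
  rw [Finset.card_image_of_injOn] at hsum
  · omega
  · intro a ha b hb hab
    have pa := hpos a ha
    have pb := hpos b hb
    simp only [one_div, inv_inj] at hab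
    have h4 : r^2 * a = r^2 * b := by exact_mod_cast hab
    exact Nat.eq_of_mul_eq_mul_left (by positivity) h4

end FS

namespace FS
open Polynomial

lemma low_bound (P : ℤ[X]) (r : ℕ) (hr : 2 ≤ r) (hdeg : P.natDegree = r) (hcoeff : P.coeff (r-1) = 0) (x : ℤ)
    (hx : x ≠ 0) : |P.eval x - P.coeff r * x^r| ≤ (∑ i ∈ Finset.range (r+1), |P.coeff i|) * |x|^(r-2) := by
  have h1 : 1 ≤ |x| := Int.one_le_abs hx
  rw [eval_eq_sum_range' (n := r+1) (by omega), Finset.sum_range_succ, add_sub_cancel_right,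
    Finset.sum_range_succ, add_mul, Finset.sum_mul]
  have h2 : 0 ≤ |P.coeff r| * |x|^(r-2) := by positivity
  have h3 := Finset.abs_sum_le_sum_abs (fun i => P.coeff i * x^i) (Finset.range r)
  have h4 : ∑ i ∈ Finset.range r, |P.coeff i * x^i| ≤ ∑ i ∈ Finset.range r, |P.coeff i| * |x|^(r-2) := by
    refine Finset.sum_le_sum fun i hi => ?_
    simp only [Finset.mem_range] at hi
    rw [abs_mul, abs_pow]
    by_cases h : i = r - 1
    · rw [h, hcoeff]; simp
    · gcongr
      omega
  linarith

lemma pow_diff (X T : ℝ) (hX : 0 ≤ X) (hT : 0 ≤ T) (r : ℕ) :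
    |X - T| * X^r ≤ |X^(r+1) - T^(r+1)| := by
  rcases le_total T X with h | h
  · have : T^(r+1) ≤ X^(r+1) := by gcongr
    rw [abs_of_nonneg (by linarith), abs_of_nonneg (by linarith)]
    have h2 : T^r ≤ X^r := by gcongr
    rw [pow_succ, pow_succ]
    nlinarith
  · have : X^(r+1) ≤ T^(r+1) := by gcongr
    rw [abs_of_nonpos (by linarith), abs_of_nonpos (by linarith)]
    have h2 : X^r ≤ T^r := by gcongr
    rw [pow_succ, pow_succ]
    nlinarith

lemma poly_close (P : ℤ[X]) (r : ℕ) (hr : 2 ≤ r) (hdeg : P.natDegree = r) (hcoeff : P.coeff (r-1) = 0)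
    (s : ℤ) (hs : s ≠ 0) :
    ∃ Cc : ℝ, 0 < Cc ∧ ∃ m0 : ℕ, ∀ m : ℕ, m0 ≤ m → ∀ x : ℤ, s * (m ! : ℤ) = P.eval x → ∀ T : ℝ, 0 < T →
      T^r = |(s:ℝ)| / |(P.coeff r : ℝ)| * m ! → x ≠ 0 ∧ |(|x| : ℝ) - T| ≤ Cc / T := by
  set H : ℤ := ∑ i ∈ Finset.range (r+1), |P.coeff i| with hH
  set a := P.coeff r with ha
  have ha0 : a ≠ 0 := by
    rw [ha, ← hdeg]
    have : P ≠ 0 := by rintro rfl; simp at hdeg; omega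
    exact leadingCoeff_ne_zero.mpr this
  have ha1 : 1 ≤ |a| := Int.one_le_abs ha0
  have hs1 : 1 ≤ |s| := Int.one_le_abs hs
  have hHle : ∀ i ∈ Finset.range (r+1), |P.coeff i| ≤ H := fun i hi =>
    Finset.single_le_sum (f := fun i => |P.coeff i|) (fun _ _ => abs_nonneg _) hi
  have hH1 : 1 ≤ H := ha1.trans (hHle r (by simp))
  have haR : (1:ℝ) ≤ |(a:ℝ)| := by exact_mod_cast ha1
  have hsR : (1:ℝ) ≤ |(s:ℝ)| := by exact_mod_cast hs1
  have hHR : (1:ℝ) ≤ H := by exact_mod_cast hH1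
  refine ⟨2 * H, by linarith, (|a| * (2*H+1)^r).toNat, ?_⟩
  intro m hm x hx T hT hTr
  have hm1 : |a| * (2*H+1)^r ≤ (m ! : ℤ) := by
    have h1 : |a| * (2*H+1)^r ≤ (m:ℤ) := by
      have := Int.self_le_toNat (|a| * (2*H+1)^r)
      omega
    exact h1.trans (by exact_mod_cast Nat.self_le_factorial m)
  have hpw : 2*H+1 ≤ (2*H+1)^r := le_self_pow₀ (by omega) (by omega)
  have hx0 : x ≠ 0 := by
    rintro rfl
    have h1 : |s| * (m ! : ℤ) = |P.coeff 0| := by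
      rw [← Polynomial.coeff_zero_eq_eval_zero] at hx
      rw [← hx, abs_mul, Nat.abs_cast]
    have h2 := hHle 0 (by simp)
    nlinarith
  refine ⟨hx0, ?_⟩
  have hX1 : (1:ℝ) ≤ |(x:ℝ)| := by exact_mod_cast Int.one_le_abs hx0
  have hlow := low_bound P r hr hdeg hcoeff x hx0
  rw [← hx, ← hH, ← ha] at hlow
  have hlowR : |(s:ℝ) * (m ! : ℝ) - a * (x:ℝ)^r| ≤ H * |(x:ℝ)|^(r-2) := by exact_mod_cast hlow
  set X := |(x:ℝ)| with hX
  have h1 : abs (|(a:ℝ)| * X^r - |(a:ℝ)| * T^r) ≤ H * X^(r-2) := by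
    have e1 : |(a:ℝ)| * T^r = |(s:ℝ) * (m ! : ℝ)| := by
      rw [hTr, abs_mul, Nat.abs_cast]; field_simp
    have e2 : |(a:ℝ)| * X^r = |(a:ℝ) * (x:ℝ)^r| := by rw [abs_mul, abs_pow]
    rw [e1, e2, abs_sub_comm]
    exact (abs_abs_sub_abs_le_abs_sub _ _).trans hlowR
  have h2 : |X^r - T^r| ≤ H * X^(r-2) := by
    rw [← mul_sub, abs_mul, abs_abs] at h1
    have := abs_nonneg (X^r - T^r)
    nlinarith
  obtain ⟨k, rfl⟩ : ∃ k, r = k + 2 := ⟨r - 2, by omega⟩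
  have h3 := pow_diff X T (by positivity) hT.le (k+1)
  have h4 : |X - T| * X ≤ H := by
    have : |X - T| * X^(k+1) ≤ H * X^k := h3.trans (by simpa using h2)
    rw [pow_succ, mul_comm (X^k), ← mul_assoc] at this
    exact le_of_mul_le_mul_right this (by positivity)
  have hT2 : 2 * (H:ℝ) < T := by
    have h5 : (2*(H:ℝ)+1)^(k+2) ≤ T^(k+2) := by
      rw [hTr, div_mul_eq_mul_div, le_div_iff₀ (by positivity)]
      have : |(a:ℝ)| * (2*(H:ℝ)+1)^(k+2) ≤ m ! := by exact_mod_cast hm1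
      have h0 : (0:ℝ) ≤ m ! := by positivity
      nlinarith
    have := le_of_pow_le_pow_left₀ (by omega) hT.le h5
    linarith
  have hXT : T / 2 ≤ X := by
    by_contra h
    push Not at h
    rw [abs_of_neg (by linarith)] at h4
    nlinarith
  rw [le_div_iff₀ hT]
  have := abs_nonneg (X - T)
  nlinarith

/-- The main scale. -/
noncomputable def TT (r : ℕ) (κ : ℝ) (m : ℕ) : ℝ := (κ * m !) ^ ((1:ℝ) / r)

lemma TT_pow (r : ℕ) (hr : 2 ≤ r) (κ : ℝ) (hκ : 0 < κ) (m : ℕ) : TT r κ m ^ r = κ * m ! := by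
  unfold TT
  rw [← Real.rpow_natCast, ← Real.rpow_mul (by positivity), one_div, inv_mul_cancel₀ (by positivity), Real.rpow_one]

lemma TT_pos (r : ℕ) (κ : ℝ) (hκ : 0 < κ) (m : ℕ) : 0 < TT r κ m := by
  unfold TT; positivity

lemma ev_gg_ge (r b : ℕ) (w : ℝ) (hw : 0 ≤ w) (h : SA (gg r b) w) : 1 ≤ ev (gg r b) w := by
  have hs : Summable fun k => rc (gg r b) k * w^k := Summable.of_norm h
  have h0 : ∀ k, 0 ≤ rc (gg r b) k := fun k => by
    unfold rc; exact_mod_cast gg_nonneg r b k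
  have := hs.le_tsum 0 (fun k _ => mul_nonneg (h0 k) (by positivity))
  have e : rc (gg r b) 0 * w^0 = 1 := by
    have := gg_const r b
    rw [← PowerSeries.coeff_zero_eq_constantCoeff_apply] at this
    simp [rc, gg_const]
  rw [e] at this
  exact this

lemma fac_prod (n β : ℕ) (h : β ≤ n) (hn : 0 < n) :
    (n ! : ℝ) = (n - β)! * (n:ℝ)^β * ∏ j ∈ Finset.range β, (1 - (j:ℝ) / n) := by
  induction β with
  | zero => simp
  | succ β ih =>
    rw [ih (by omega), Finset.prod_range_succ]
    have e : n - β = (n - (β+1)) + 1 := by omega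
    have e2 : ((n - β : ℕ):ℝ) = n - β := by rw [Nat.cast_sub (by omega)]
    have e3 : ((n - β)! : ℝ) = (n - β) * (n - (β+1))! := by
      rw [← e2]
      conv_lhs => rw [e, Nat.factorial_succ]
      push_cast [e]
      simp
    rw [e3]
    have : (n:ℝ) ≠ 0 := by positivity
    field_simp
    ring

lemma TT_rel (r M β n : ℕ) (hr : 2 ≤ r) (κ : ℝ) (hκ : 0 < κ) (hβ : β ≤ M) (hn : 8 * M ≤ n) (hn0 : 0 < n)
    (hd : r ∣ β) : 1 ≤ ev (gg r β) (1 / ((r^2 * n : ℕ):ℝ)) ∧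
    (n:ℝ)^(β / r) * TT r κ (n - β) = TT r κ n * ev (gg r β) (1 / ((r^2 * n : ℕ):ℝ)) := by
  set w : ℝ := 1 / ((r^2 * n : ℕ):ℝ) with hw
  have hw0 : 0 ≤ w := by positivity
  have hr0 : (r:ℝ) ≠ 0 := by positivity
  have hnr : (0:ℝ) < n := by exact_mod_cast hn0
  have hQw : 4 * (2 * (r:ℝ)^2 * M * w) ≤ 1 := by
    have eQ : 4 * (2 * (r:ℝ)^2 * M * w) = 8 * M / n := by
      rw [hw]; push_cast; field_simp; ring
    rw [eQ, div_le_one hnr]; exact_mod_cast hn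
  have hSA := SA_gg r β M (by omega) hβ w hw0 hQw
  have h1 := ev_gg_ge r β w hw0 hSA
  refine ⟨h1, ?_⟩
  have hp := gg_pow r β
  have hp2 : ev ((qq r β : PowerSeries ℤ) * gg r β ^ r) w = 1 := by rw [hp, ev_one]
  rw [ev_mul (SA_poly _ _) (SA_ev_pow hSA r).1, (SA_ev_pow hSA r).2, ev_poly] at hp2
  have eq : ((qq r β).map (Int.castRingHom ℝ)).eval w = ∏ j ∈ Finset.range β, (1 - (j:ℝ) / n) := by
    unfold qq
    rw [Polynomial.map_prod, eval_prod]
    refine Finset.prod_congr rfl fun j _ => ?_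
    rw [eval_lin, hw]
    push_cast; field_simp
  rw [eq] at hp2
  have hT1 := TT_pos r κ hκ n
  have hT2 := TT_pos r κ hκ (n - β)
  refine (pow_left_inj₀ (by positivity) (by positivity) (by omega : r ≠ 0)).mp ?_
  rw [mul_pow, mul_pow, TT_pow r hr κ hκ, TT_pow r hr κ hκ, ← pow_mul, Nat.div_mul_cancel hd,
    fac_prod n β (by omega) hn0]
  linear_combination (-(κ * (n - β)! * (n:ℝ)^β)) * hp2

lemma sol_approx (P : ℤ[X]) (r : ℕ) (hr : 2 ≤ r) (hdeg : P.natDegree = r) (hcoeff : P.coeff (r-1) = 0)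
    (s : ℤ) (hs : s ≠ 0) :
    ∃ κ : ℝ, 0 < κ ∧ ∃ Cc : ℝ, 0 < Cc ∧ ∃ m0 : ℕ, ∀ n M β1 β2 : ℕ, r ∣ β1 → r ∣ β2 → β1 ≤ M → β2 ≤ M →
      8 * M ≤ n → 0 < n → m0 + M ≤ n → (∃ x x₁ x₂ : ℤ, s * (n ! : ℤ) = P.eval x ∧
        s * ((n - β1)! : ℤ) = P.eval x₁ ∧ s * ((n - β2)! : ℤ) = P.eval x₂) →
      ∃ y0 y1 y2 : ℤ, y0 ≠ 0 ∧ |(y0:ℝ) - TT r κ n| ≤ Cc * (n:ℝ)^(2*M) / TT r κ n ∧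
      |(y1:ℝ) - TT r κ n * ev (gg r β1) (1 / ((r^2 * n : ℕ):ℝ))| ≤ Cc * (n:ℝ)^(2*M) / TT r κ n ∧
      |(y2:ℝ) - TT r κ n * ev (gg r β2) (1 / ((r^2 * n : ℕ):ℝ))| ≤ Cc * (n:ℝ)^(2*M) / TT r κ n := by
  obtain ⟨Cc, hC, m0, h⟩ := poly_close P r hr hdeg hcoeff s hs
  have ha0 : P.coeff r ≠ 0 := by
    rw [← hdeg]
    have : P ≠ 0 := by rintro rfl; simp at hdeg; omega
    exact leadingCoeff_ne_zero.mpr this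
  have hsR : (0:ℝ) < |(s:ℝ)| := abs_pos.mpr (by exact_mod_cast hs)
  have haR : (0:ℝ) < |(P.coeff r:ℝ)| := abs_pos.mpr (by exact_mod_cast ha0)
  set κ := |(s:ℝ)| / |(P.coeff r : ℝ)| with hκd
  have hκ : 0 < κ := by positivity
  refine ⟨κ, hκ, Cc, hC, m0, ?_⟩
  intro n M β1 β2 hd1 hd2 hb1 hb2 h8 hn0 hm ⟨x, x1, x2, e0, e1, e2⟩
  have hnr : (1:ℝ) ≤ n := by exact_mod_cast hn0
  have hT := TT_pos r κ hκ n
  have key : ∀ β ≤ M, r ∣ β → ∀ x : ℤ, s * ((n - β)! : ℤ) = P.eval x →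
      |(((n^(β/r) : ℕ) * |x| : ℤ):ℝ) - TT r κ n * ev (gg r β) (1 / ((r^2 * n : ℕ):ℝ))| ≤ Cc * (n:ℝ)^(2*M) / TT r κ n := by
    intro β hb hd x ex
    have hTb := TT_pos r κ hκ (n - β)
    obtain ⟨g1, g2⟩ := TT_rel r M β n hr κ hκ hb h8 hn0 hd
    have hc := (h (n - β) (by omega) x ex (TT r κ (n - β)) hTb (TT_pow r hr κ hκ _)).2
    rw [← g2]
    push_cast
    rw [← mul_sub, abs_mul, abs_of_nonneg (by positivity : (0:ℝ) ≤ (n:ℝ)^(β/r))]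
    have hTge : TT r κ n ≤ (n:ℝ)^(β/r) * TT r κ (n - β) := by rw [g2]; nlinarith
    calc (n:ℝ)^(β/r) * |(|x|:ℝ) - TT r κ (n - β)| ≤ (n:ℝ)^(β/r) * (Cc / TT r κ (n - β)) := by gcongr
      _ = Cc * (n:ℝ)^(2*(β/r)) / ((n:ℝ)^(β/r) * TT r κ (n - β)) := by
          rw [two_mul, pow_add]
          field_simp
      _ ≤ Cc * (n:ℝ)^(2*M) / TT r κ n := by
          gcongr
          exact (Nat.div_le_self _ _).trans hb
  refine ⟨|x|, (n^(β1/r) : ℕ) * |x1|, (n^(β2/r) : ℕ) * |x2|, ?_, ?_, key β1 hb1 hd1 x1 e1, key β2 hb2 hd2 x2 e2⟩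
  · have := (h n (by omega) x e0 _ hT (TT_pow r hr κ hκ _)).1
    simpa using this
  · have := (h n (by omega) x e0 _ hT (TT_pow r hr κ hκ _)).2
    push_cast
    refine this.trans ?_
    gcongr
    have : (1:ℝ) ≤ (n:ℝ)^(2*M) := one_le_pow₀ hnr
    nlinarith

end FS

namespace FS
open Polynomial

lemma pow_exp (x a : ℝ) (hx : 0 ≤ x) (h : x ≤ Real.exp a) (k : ℕ) : x^k ≤ Real.exp (k * a) := by
  rw [Real.exp_nat_mul]; gcongr

lemma le_exp_log (x a : ℝ) (hx : 0 < x) (h : Real.log x ≤ a) : x ≤ Real.exp a := by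
  rw [← Real.exp_log hx]; exact Real.exp_le_exp.mpr h

lemma le_exp_self (x : ℝ) : x ≤ Real.exp x := by linarith [Real.add_one_le_exp x]

lemma TT_log (r n : ℕ) (hr : 2 ≤ r) (κ : ℝ) (hκ : 0 < κ) :
    Real.log (TT r κ n) = (Real.log κ + Real.log n !) / r := by
  unfold TT
  rw [Real.log_rpow (by positivity), Real.log_mul hκ.ne' (by positivity)]
  ring

lemma log_fac_le (n : ℕ) : Real.log n ! ≤ n * Real.log n := by
  rw [← Real.log_pow]
  exact Real.log_le_log (by positivity) (by exact_mod_cast Nat.factorial_le_pow n)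

lemma log_fac_ge (n : ℕ) (hn : 0 < n) : n * Real.log n - n ≤ Real.log n ! := by
  have h := Real.pow_div_factorial_le_exp (n:ℝ) (by positivity) n
  have h2 := Real.log_le_log (by positivity) h
  rw [Real.log_exp, Real.log_div (by positivity) (by positivity), Real.log_pow] at h2
  linarith

set_option maxHeartbeats 2000000 in
/-- prefactor bound -/
lemma pre_bound (r M n l t Xb : ℕ) (hr : 2 ≤ r) (e θ Nr : ℝ) (he : 1 ≤ e) (hN : 1 ≤ Nr)
    (hM : 1 ≤ M) (hM4 : (M:ℝ)^4 * e^2 ≤ Nr) (hlM : Real.log M ≤ θ * e)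
    (hn0 : 0 < n) (hln : Real.log n ≤ e + 1) (hl : (l:ℝ) ≤ Nr) (ht : (t:ℝ) ≤ 4 * (M:ℝ)^3 * e)
    (hlt : Real.log (4 * Nr) ≤ 2 * e)
    (hX : Xb + 1 = (3 * (2 * l + 1) * 2^M)^5 * (2 * r^2 * M)^(13*l)) :
    ((r^2 * n : ℕ):ℝ)^(2*l + t*M) * (2 * (Xb * Wc r M ^ t * t ! * 2^t)) ≤
      Real.exp (2 * l * e + 13 * l * θ * e + (44 * (r:ℝ)^2 + 90) * Nr) := by
  have hM1 : (1:ℝ) ≤ M := by exact_mod_cast hM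
  have hr2 : (2:ℝ) ≤ r := by exact_mod_cast hr
  have hM34 : (M:ℝ)^3 ≤ (M:ℝ)^4 := pow_le_pow_right₀ hM1 (by norm_num)
  have hM14 : (M:ℝ) ≤ (M:ℝ)^4 := le_self_pow₀ hM1 (by norm_num)
  have hM4p : (0:ℝ) < (M:ℝ)^4 := by positivity
  have hee : e ≤ e^2 := by nlinarith
  have hM4e : (M:ℝ)^4 * e ≤ Nr := by nlinarith
  have hMN : (M:ℝ) ≤ Nr := by nlinarith
  have ht0 : (0:ℝ) ≤ t := by positivity
  have htM : (t:ℝ) * M ≤ 4 * ((M:ℝ)^4 * e) := by nlinarith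
  have htMe : (t:ℝ) * M * e ≤ 4 * Nr := by nlinarith
  have ht_tM : (t:ℝ) ≤ t * M := by nlinarith
  have htM' : (t:ℝ) * M ≤ 4 * Nr := by nlinarith
  have hte : (t:ℝ) * e ≤ 4 * Nr := by nlinarith
  have hl0 : (0:ℝ) ≤ l := by positivity
  have hnr : (0:ℝ) < n := by exact_mod_cast hn0
  -- p1
  have p1 : ((r^2 * n : ℕ):ℝ)^(2*l + t*M) ≤ Real.exp (2 * l * e + (6 * (r:ℝ)^2 + 10) * Nr) := by
    have h1 : ((r^2 * n : ℕ):ℝ) ≤ Real.exp ((r:ℝ)^2 + e + 1) := by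
      push_cast
      rw [add_assoc, Real.exp_add]
      gcongr
      · exact le_exp_self _
      · exact le_exp_log _ _ hnr hln
    refine (pow_exp _ _ (by positivity) h1 _).trans (Real.exp_le_exp.mpr ?_)
    push_cast
    have a1 : (l:ℝ) * ((r:ℝ)^2 + 1) ≤ Nr * ((r:ℝ)^2 + 1) := by gcongr
    have a2 : (t:ℝ) * M * ((r:ℝ)^2 + 1) ≤ 4 * Nr * ((r:ℝ)^2 + 1) := by gcongr
    nlinarith
  have p2 : (Xb:ℝ) ≤ Real.exp (13 * l * θ * e + (26 * (r:ℝ)^2 + 50) * Nr) := by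
    have h0 : (Xb:ℝ) ≤ (3 * (2 * l + 1) * 2^M)^5 * (2 * r^2 * M)^(13*l) := by
      have : Xb ≤ (3 * (2 * l + 1) * 2^M)^5 * (2 * r^2 * M)^(13*l) := by omega
      exact_mod_cast this
    have h1 : (3 * (2 * (l:ℝ) + 1) * 2^M) ≤ Real.exp (10 * Nr) := by
      have : (10:ℝ) * Nr = 9 * Nr + Nr := by ring
      rw [this, Real.exp_add]
      gcongr
      · exact le_trans (by linarith) (le_exp_self _)
      · have h2 : (2:ℝ) ≤ Real.exp 1 := by linarith [Real.add_one_le_exp 1]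
        exact (pow_exp _ _ (by norm_num) h2 _).trans (Real.exp_le_exp.mpr (by linarith))
    have h2 : (2 * (r:ℝ)^2 * M) ≤ Real.exp (2 * (r:ℝ)^2 + θ * e) := by
      rw [Real.exp_add]
      gcongr
      · exact le_exp_self _
      · exact le_exp_log _ _ (by positivity) hlM
    have h3 := pow_exp _ _ (by positivity) h1 5
    have h4 := pow_exp _ _ (by positivity) h2 (13*l)
    refine h0.trans ((mul_le_mul h3 h4 (by positivity) (by positivity)).trans ?_)
    rw [← Real.exp_add]
    refine Real.exp_le_exp.mpr ?_
    push_cast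
    have a1 : (l:ℝ) * ((r:ℝ)^2) ≤ Nr * ((r:ℝ)^2) := by gcongr
    nlinarith
  have p3 : Wc r M ^ t ≤ Real.exp ((12 * (r:ℝ)^2 + 12) * Nr) := by
    have h1 : Wc r M ≤ Real.exp (M * (3 * (r:ℝ)^2 + 3)) := by
      have h2 : (2:ℝ)^M ≤ Real.exp M := by
        have h2 : (2:ℝ) ≤ Real.exp 1 := by linarith [Real.add_one_le_exp 1]
        simpa using pow_exp _ _ (by norm_num) h2 M
      have h3 : Wc r M ≤ 2^M * ((M * M) * (3 * (r:ℝ)^2)) := by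
        unfold Wc
        push_cast
        have b1 : (r:ℝ) ≤ (r:ℝ)^2 := by nlinarith
        have b2 : (M:ℝ) ≤ M * M := by nlinarith
        have b3 : (0:ℝ) < 2^M := by positivity
        have b4 : 2 * (r:ℝ)^2 * M + M * (r * M) ≤ (M * M) * (3 * (r:ℝ)^2) := by
          have c1 : 2 * (r:ℝ)^2 * M ≤ 2 * (r:ℝ)^2 * (M * M) := by gcongr
          have c2 : (M:ℝ) * M * r ≤ M * M * (r:ℝ)^2 := by gcongr
          nlinarith
        nlinarith
      refine h3.trans ?_
      have e1 : (M:ℝ) * (3 * (r:ℝ)^2 + 3) = M + ((M + M) + 3 * (r:ℝ)^2 * M) := by ring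
      rw [e1, Real.exp_add, Real.exp_add, Real.exp_add]
      gcongr
      · exact le_exp_self _
      · exact le_exp_self _
      · refine le_trans ?_ (le_exp_self _)
        nlinarith [sq_nonneg (r:ℝ)]
    refine (pow_exp _ _ (Wc_nonneg r M) h1 t).trans (Real.exp_le_exp.mpr ?_)
    have a2 : (t:ℝ) * M * (3 * (r:ℝ)^2 + 3) ≤ 4 * Nr * (3 * (r:ℝ)^2 + 3) := by gcongr
    nlinarith
  have p4 : (t ! : ℝ) ≤ Real.exp (8 * Nr) := by
    rcases Nat.eq_zero_or_pos t with h | h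
    · subst h; simp; linarith
    · refine le_exp_log _ _ (by positivity) ((log_fac_le t).trans ?_)
      have : Real.log t ≤ 2 * e := (Real.log_le_log (by exact_mod_cast h) (by linarith)).trans hlt
      nlinarith
  have p5 : (2:ℝ)^t ≤ Real.exp (4 * Nr) := by
    have h2 : (2:ℝ) ≤ Real.exp 1 := by linarith [Real.add_one_le_exp 1]
    exact (pow_exp _ _ (by norm_num) h2 _).trans (Real.exp_le_exp.mpr (by linarith))
  have p6 : (2:ℝ) ≤ Real.exp Nr := by linarith [Real.add_one_le_exp Nr]
  have hW := Wc_nonneg r M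
  calc ((r^2 * n : ℕ):ℝ)^(2*l + t*M) * (2 * (Xb * Wc r M ^ t * t ! * 2^t))
      ≤ Real.exp (2 * l * e + (6 * (r:ℝ)^2 + 10) * Nr) * (Real.exp Nr *
        (Real.exp (13 * l * θ * e + (26 * (r:ℝ)^2 + 50) * Nr) * Real.exp ((12 * (r:ℝ)^2 + 12) * Nr)
          * Real.exp (8 * Nr) * Real.exp (4 * Nr))) := by gcongr
    _ = Real.exp (2 * l * e + 13 * l * θ * e + (44 * (r:ℝ)^2 + 85) * Nr) := by
        simp only [← Real.exp_add]; congr 1; ring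
    _ ≤ _ := by
        refine Real.exp_le_exp.mpr ?_
        nlinarith

lemma q1_bound (r M n l t 𝒩 : ℕ) (hr : 2 ≤ r) (κ : ℝ) (hκ : 0 < κ) (e θ Nr : ℝ) (he : 20 ≤ e) (hN : 1 ≤ Nr)
    (hθ0 : 0 ≤ θ) (hθ : θ ≤ 1/20)
    (hM : 1 ≤ M) (hMN : (M:ℝ) ≤ Nr) (hlM : Real.log M ≤ θ * e)
    (hn0 : 0 < n) (hln : Real.log n ≤ e + 1) (hln2 : e ≤ Real.log n)
    (hn : (n:ℝ) ≤ 𝒩 + Nr / e) (hN2 : (𝒩:ℝ) ≤ 2 * Nr) (hl : (l:ℝ) ≤ Nr) (hte : (t:ℝ) * e ≤ 4 * Nr) :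
    TT r κ n * (5 * 2^M) * (8 * M / n)^(5*l-t) ≤
      Real.exp (𝒩 * e / r - 5 * l * (1 - θ) * e + (60 + |Real.log κ|) * Nr) := by
  have hr2 : (2:ℝ) ≤ r := by exact_mod_cast hr
  have hnr : (0:ℝ) < n := by exact_mod_cast hn0
  have hM1 : (1:ℝ) ≤ M := by exact_mod_cast hM
  have a1 : TT r κ n ≤ Real.exp (𝒩 * e / r + (4 + |Real.log κ|) * Nr) := by
    refine le_exp_log _ _ (TT_pos r κ hκ n) ?_
    rw [TT_log r n hr κ hκ, div_add' _ _ _ (by positivity)]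
    refine div_le_div_of_nonneg_right ?_ (by positivity)
    have h1 := log_fac_le n
    have h2 : (n:ℝ) * Real.log n ≤ (𝒩 + Nr / e) * (e + 1) := by
      gcongr
    have h3 : (𝒩 + Nr / e) * (e + 1) ≤ 𝒩 * e + 4 * Nr := by
      have : Nr / e * (e + 1) ≤ 2 * Nr := by
        rw [div_mul_eq_mul_div, div_le_iff₀ (by linarith)]
        nlinarith
      nlinarith
    have h4 := le_abs_self (Real.log κ)
    have h5 := abs_nonneg (Real.log κ)
    have h6 : |Real.log κ| ≤ |Real.log κ| * Nr := by nlinarith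
    have h7 : (4 + |Real.log κ|) * Nr ≤ (4 + |Real.log κ|) * Nr * r := by
      have : 0 ≤ (4 + |Real.log κ|) * Nr := by positivity
      nlinarith
    nlinarith
  have a2 : (5:ℝ) * 2^M ≤ Real.exp (6 * Nr) := by
    have h2 : (2:ℝ) ≤ Real.exp 1 := by linarith [Real.add_one_le_exp 1]
    have h3 := pow_exp _ _ (by norm_num) h2 M
    have h4 : (5:ℝ) ≤ Real.exp 5 := le_exp_self _
    calc (5:ℝ) * 2^M ≤ Real.exp 5 * Real.exp (M * 1) := by gcongr
      _ = Real.exp (5 + M * 1) := by rw [Real.exp_add]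
      _ ≤ _ := Real.exp_le_exp.mpr (by linarith)
  have a3 : (8 * (M:ℝ) / n)^(5*l-t) ≤ Real.exp (- (5 * l * (1 - θ) * e) + 44 * Nr) := by
    have h1 : 8 * (M:ℝ) / n ≤ Real.exp (-((1 - θ) * e - 8)) := by
      refine le_exp_log _ _ (by positivity) ?_
      rw [Real.log_div (by positivity) (by positivity), Real.log_mul (by norm_num) (by positivity)]
      have := Real.log_le_self (by norm_num : (0:ℝ) ≤ 8)
      linarith
    refine (pow_exp _ _ (by positivity) h1 _).trans (Real.exp_le_exp.mpr ?_)
    have h2 : 5 * (l:ℝ) - t ≤ ((5 * l - t : ℕ):ℝ) := by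
      have : 5 * l ≤ (5 * l - t) + t := by omega
      have h3 : 5 * (l:ℝ) ≤ ((5 * l - t : ℕ):ℝ) + t := by exact_mod_cast this
      linarith
    have h3 : 0 ≤ (1 - θ) * e - 8 := by nlinarith
    have h4 : (5 * (l:ℝ) - t) * ((1 - θ) * e - 8) ≤ ((5 * l - t : ℕ):ℝ) * ((1 - θ) * e - 8) := by gcongr
    have h5 : 0 ≤ (t:ℝ) * θ * e := by positivity
    have h6 : (0:ℝ) ≤ t := by positivity
    nlinarith
  have hT := TT_pos r κ hκ n
  calc TT r κ n * (5 * 2^M) * (8 * M / n)^(5*l-t) ≤ Real.exp (𝒩 * e / r + (4 + |Real.log κ|) * Nr) *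
      Real.exp (6 * Nr) * Real.exp (- (5 * l * (1 - θ) * e) + 44 * Nr) := by gcongr
    _ = Real.exp (𝒩 * e / r - 5 * l * (1 - θ) * e + (54 + |Real.log κ|) * Nr) := by
        simp only [← Real.exp_add]; congr 1; ring
    _ ≤ _ := by
        refine Real.exp_le_exp.mpr ?_
        nlinarith

lemma q2_bound (r M n 𝒩 : ℕ) (hr : 2 ≤ r) (κ Cc : ℝ) (hκ : 0 < κ) (hC : 0 < Cc) (e Nr : ℝ) (he : 20 ≤ e) (hN : 1 ≤ Nr)
    (hMe : (M:ℝ) * e ≤ Nr)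
    (hn0 : 0 < n) (hln : Real.log n ≤ e + 1) (hln2 : e ≤ Real.log n)
    (hn : (𝒩:ℝ) ≤ n) (hN2 : (n:ℝ) ≤ 2 * Nr) :
    3 * (Cc * (n:ℝ)^(2*M) / TT r κ n) ≤
      Real.exp (- (𝒩 * e / r) + (10 + |Real.log κ| + |Real.log Cc|) * Nr) := by
  have hr2 : (2:ℝ) ≤ r := by exact_mod_cast hr
  have hnr : (0:ℝ) < n := by exact_mod_cast hn0
  have hT := TT_pos r κ hκ n
  have h5 := abs_nonneg (Real.log κ)
  have h5c := abs_nonneg (Real.log Cc)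
  refine le_exp_log _ _ (by positivity) ?_
  rw [Real.log_mul (by norm_num) (by positivity), Real.log_div (by positivity) hT.ne', Real.log_mul hC.ne' (by positivity),
    Real.log_pow, TT_log r n hr κ hκ]
  have h1 := log_fac_ge n hn0
  have h2 : (𝒩:ℝ) * e ≤ n * Real.log n := by gcongr
  have h3 : (𝒩 * e) / r - (2 + |Real.log κ|) * Nr ≤ (Real.log κ + Real.log n !) / r := by
    rw [div_sub' (by positivity)]
    gcongr
    have h4 := neg_abs_le (Real.log κ)
    have h6 : |Real.log κ| ≤ |Real.log κ| * Nr := by nlinarith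
    have h7 : (2 + |Real.log κ|) * Nr ≤ r * ((2 + |Real.log κ|) * Nr) := by
      have : 0 ≤ (2 + |Real.log κ|) * Nr := by positivity
      nlinarith
    nlinarith
  have h8 := Real.log_le_self (by norm_num : (0:ℝ) ≤ 3)
  have h9 := le_abs_self (Real.log Cc)
  have h10 : |Real.log Cc| ≤ |Real.log Cc| * Nr := by nlinarith
  have h11 : ((2 * M : ℕ):ℝ) * Real.log n ≤ 4 * Nr := by
    push_cast
    have : (2 * (M:ℝ)) * Real.log n ≤ 2 * M * (e + 1) := by gcongr
    have h0 : (0:ℝ) ≤ M := by positivity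
    nlinarith
  linarith

set_option maxHeartbeats 2000000 in
lemma num (r : ℕ) (hr : 2 ≤ r) (κ Cc : ℝ) (hκ : 0 < κ) (hC : 0 < Cc) : ∃ e0 : ℝ, 20 ≤ e0 ∧
    ∀ (M n l t Xb 𝒩 : ℕ) (e θ Nr : ℝ), e0 ≤ e → e ≤ Nr → 0 ≤ θ → θ ≤ 0.0295 → 1 ≤ M → (M:ℝ)^4 * e^2 ≤ Nr →
      Real.log M ≤ θ * e → 0 < n → Real.log n ≤ e + 1 → e ≤ Real.log n →
      (n:ℝ) ≤ 𝒩 + Nr / e → (𝒩:ℝ) ≤ n → Nr ≤ 𝒩 → (n:ℝ) ≤ 2 * Nr → l = (33 * 𝒩) / (80 * r) →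
      (t:ℝ) ≤ 4 * (M:ℝ)^3 * e → Real.log (4 * Nr) ≤ 2 * e →
      Xb + 1 = (3 * (2 * l + 1) * 2^M)^5 * (2 * r^2 * M)^(13*l) →
      ((r^2 * n : ℕ):ℝ)^(2*l + t*M) * (2 * (Xb * Wc r M ^ t * t ! * 2^t) *
        (TT r κ n * (5 * 2^M) * (8 * M / n)^(5*l-t) + 3 * (Cc * (n:ℝ)^(2*M) / TT r κ n))) < 1 := by
  set K : ℝ := 44 * (r:ℝ)^2 + 150 + |Real.log κ| + |Real.log Cc| with hK
  have h5 := abs_nonneg (Real.log κ)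
  have h5c := abs_nonneg (Real.log Cc)
  have hr2 : (2:ℝ) ≤ r := by exact_mod_cast hr
  have hK0 : 150 ≤ K := by nlinarith
  refine ⟨60 * r * (K + 4), by nlinarith, ?_⟩
  intro M n l t Xb 𝒩 e θ Nr he0 heN hθ0 hθ hM hM4 hlM hn0 hln hln2 hn hn2 hN𝒩 hnN hl ht hlt hX
  have he : 20 ≤ e := by nlinarith
  have hN : 1 ≤ Nr := by linarith
  have hr0 : (0:ℝ) < r := by linarith
  set q : ℝ := 𝒩 / r with hq
  have hlr : (l:ℝ) ≤ 33 / 80 * q := by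
    have h1 : l * (80 * r) ≤ 33 * 𝒩 := by rw [hl]; exact Nat.div_mul_le_self _ _
    have h2 : (l:ℝ) * (80 * r) ≤ 33 * 𝒩 := by exact_mod_cast h1
    rw [hq, ← mul_div_assoc, le_div_iff₀ hr0]
    linarith
  have hlr2 : 33 / 80 * q - 1 ≤ l := by
    have h1 : 33 * 𝒩 < (l + 1) * (80 * r) := by
      rw [hl]
      have := Nat.lt_div_mul_add (a := 33 * 𝒩) (b := 80 * r) (by omega)
      linarith
    have h2 : (33:ℝ) * 𝒩 < (l + 1) * (80 * r) := by exact_mod_cast h1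
    rw [sub_le_iff_le_add, hq, ← mul_div_assoc, div_le_iff₀ hr0]
    linarith
  have hqN : Nr / r ≤ q := by rw [hq]; gcongr
  have hq2 : q ≤ Nr := by
    rw [hq, div_le_iff₀ hr0]; nlinarith
  have hl0 : (0:ℝ) ≤ l := by positivity
  have hlN : (l:ℝ) ≤ Nr := by linarith
  have hM1 : (1:ℝ) ≤ M := by exact_mod_cast hM
  have hM34 : (M:ℝ)^3 ≤ (M:ℝ)^4 := pow_le_pow_right₀ hM1 (by norm_num)
  have hM14 : (M:ℝ) ≤ (M:ℝ)^4 := le_self_pow₀ hM1 (by norm_num)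
  have hM4p : (0:ℝ) < (M:ℝ)^4 := by positivity
  have hee : e ≤ e^2 := by nlinarith
  have hM4e : (M:ℝ)^4 * e ≤ Nr := by nlinarith
  have hMe : (M:ℝ) * e ≤ Nr := by nlinarith
  have hMN : (M:ℝ) ≤ Nr := by nlinarith
  have hte : (t:ℝ) * e ≤ 4 * Nr := by
    have h1 : (t:ℝ) * e ≤ 4 * (M:ℝ)^3 * e * e := by gcongr
    have h2 : (M:ℝ)^3 * e^2 ≤ (M:ℝ)^4 * e^2 := by gcongr
    linarith
  have P1 := pre_bound r M n l t Xb hr e θ Nr (by linarith) hN hM hM4 hlM hn0 hln hlN ht hlt hX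
  have P2 := q1_bound r M n l t 𝒩 hr κ hκ e θ Nr he hN hθ0 (by linarith) hM hMN hlM hn0 hln hln2 hn (by linarith) hlN hte
  have P3 := q2_bound r M n 𝒩 hr κ Cc hκ hC e Nr he hN hMe hn0 hln hln2 hn2 hnN
  have hT := TT_pos r κ hκ n
  have hW := Wc_nonneg r M
  have e1 : (𝒩:ℝ) * e / r = q * e := by rw [hq]; ring
  rw [e1] at P2 P3
  set G := ((r^2 * n : ℕ):ℝ)^(2*l + t*M) * (2 * (Xb * Wc r M ^ t * t ! * 2^t)) with hG
  have hG0 : 0 ≤ G := by positivity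
  rw [← mul_assoc, ← hG, mul_add]
  have main : (K + 4) * Nr ≤ q * e / 60 := by
    have h1 : Nr / r * (60 * r * (K + 4)) ≤ q * e := by gcongr
    have h2 : Nr / r * (60 * r * (K + 4)) = 60 * ((K + 4) * Nr) := by field_simp
    linarith
  have he00 : 0 ≤ e := by linarith
  have hle : (l:ℝ) * e ≤ 33 / 80 * (q * e) := by
    have := mul_le_mul_of_nonneg_right hlr he00
    linarith
  have hle2 : 33 / 80 * (q * e) - e ≤ (l:ℝ) * e := by
    have := mul_le_mul_of_nonneg_right hlr2 he00
    linarith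
  have hle0 : 0 ≤ (l:ℝ) * e := by positivity
  have hthe : (l:ℝ) * e * θ ≤ (l:ℝ) * e * 0.0295 := by gcongr
  have hKN : (44 * (r:ℝ)^2 + 150 + |Real.log κ| + |Real.log Cc|) * Nr = K * Nr := by rw [hK]
  have hcN : 0 ≤ |Real.log Cc| * Nr := by positivity
  have hκN : 0 ≤ |Real.log κ| * Nr := by positivity
  have E1 : G * (TT r κ n * (5 * 2^M) * (8 * M / n)^(5*l-t)) ≤ Real.exp (-1) := by
    refine (mul_le_mul P1 P2 (by positivity) (by positivity)).trans ?_
    rw [← Real.exp_add]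
    refine Real.exp_le_exp.mpr ?_
    linarith
  have E2 : G * (3 * (Cc * (n:ℝ)^(2*M) / TT r κ n)) ≤ Real.exp (-1) := by
    refine (mul_le_mul P1 P3 (by positivity) (by positivity)).trans ?_
    rw [← Real.exp_add]
    refine Real.exp_le_exp.mpr ?_
    linarith
  have hex : Real.exp (-1) < 1/2 := by
    have := Real.exp_neg_one_lt_d9
    linarith
  linarith

end FS

/-- **Few solutions with small difference** (Proposition 3.2).
Let `P ∈ ℤ[x]` have degree `r ≥ 2` with the coefficient of `x^(r−1)` equal to zero, and let
`s ≠ 0` be an integer. For every sufficiently small `ε > 0` there exists `N₀` such that for all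
`N ≥ N₀`: with `θ ∈ [1/1000, 1/20]`, `θ ≤ 17 − 12√2 − ε`, `M = ⌊N^θ⌋`, `β₁ < β₂` positive
multiples of `r` with `r ≤ β₁ < β₂ ≤ M`, and `𝒩 ∈ [N, 2N)`, the number of `n` in
`[𝒩, 𝒩 + ⌊N/log N⌋) ∩ [N, 2N)` with `s·n! = P(x)`, `s·(n−β₁)! = P(x₁)`, `s·(n−β₂)! = P(x₂)`
solvable in integers is at most `N/(M³·log N)`. -/
theorem few_solutions_with_small_difference
    (P : Polynomial ℤ) (r : ℕ) (hr : 2 ≤ r) (hdeg : P.natDegree = r)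
    (hcoeff : P.coeff (r - 1) = 0) (s : ℤ) (hs : s ≠ 0) :
    ∃ ε₁ : ℝ, 0 < ε₁ ∧ ∀ ε : ℝ, 0 < ε → ε ≤ ε₁ →
      ∃ N₀ : ℕ, ∀ N : ℕ, N₀ ≤ N →
        ∀ θ : ℝ, 1 / 1000 ≤ θ → θ ≤ 1 / 20 → θ ≤ 17 - 12 * Real.sqrt 2 - ε →
        ∀ M : ℕ, M = ⌊(N : ℝ) ^ θ⌋₊ →
        ∀ β₁ β₂ : ℕ, r ∣ β₁ → r ∣ β₂ → r ≤ β₁ → β₁ < β₂ → β₂ ≤ M →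
        ∀ 𝒩 : ℕ, N ≤ 𝒩 → 𝒩 < 2 * N →
        ((((Finset.Ico 𝒩 (𝒩 + ⌊(N : ℝ) / Real.log N⌋₊)) ∩ (Finset.Ico N (2 * N))).filter
            (fun n => ∃ x x₁ x₂ : ℤ,
              s * (n ! : ℤ) = P.eval x ∧
              s * ((n - β₁)! : ℤ) = P.eval x₁ ∧
              s * ((n - β₂)! : ℤ) = P.eval x₂)).card : ℝ)
          ≤ (N : ℝ) / ((M : ℝ) ^ 3 * Real.log N) := by
  classical
  obtain ⟨κ, hκ, Cc, hC, m0, happ⟩ := FS.sol_approx P r hr hdeg hcoeff s hs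
  obtain ⟨e0, he20, hnum⟩ := FS.num r hr κ Cc hκ hC
  refine ⟨1, one_pos, fun ε hε _ => ?_⟩
  have hlogtop : Filter.Tendsto (fun N : ℕ => Real.log (N:ℝ)) Filter.atTop Filter.atTop :=
    Real.tendsto_log_atTop.comp tendsto_natCast_atTop_atTop
  have ev1 : ∀ᶠ N : ℕ in Filter.atTop, e0 + 80 * r ≤ Real.log (N:ℝ) := hlogtop.eventually_ge_atTop _
  have ev2 : ∀ᶠ N : ℕ in Filter.atTop, Real.log (N:ℝ) ≤ (N:ℝ)^((2:ℝ)/5) := by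
    have h := (isLittleO_log_rpow_atTop (by norm_num : (0:ℝ) < 2/5)).bound (by norm_num : (0:ℝ) < 1)
    have h2 := tendsto_natCast_atTop_atTop (R := ℝ) |>.eventually h
    filter_upwards [h2] with N hN
    rw [one_mul, Real.norm_eq_abs, Real.norm_eq_abs, abs_of_nonneg (by positivity : (0:ℝ) ≤ (N:ℝ)^((2:ℝ)/5))] at hN
    exact (le_abs_self _).trans hN
  have ev3 : ∀ᶠ N : ℕ in Filter.atTop, 2 * m0 + 1 ≤ N := Filter.eventually_ge_atTop _
  obtain ⟨N₀, hN₀⟩ := Filter.eventually_atTop.mp (ev1.and (ev2.and ev3))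
  refine ⟨N₀, ?_⟩
  intro N hN θ hθ1 hθ2 hθ3 M hMdef β₁ β₂ hd1 hd2 hb1 hb12 hb2 𝒩 hN1 hN2
  obtain ⟨he0, heN, hm0⟩ := hN₀ N hN
  set e := Real.log (N:ℝ) with he
  have hr2 : (2:ℝ) ≤ r := by exact_mod_cast hr
  have hNpos : (0:ℝ) < N := by exact_mod_cast (by omega : 0 < N)
  have hN1r : (1:ℝ) ≤ N := by exact_mod_cast (by omega : 1 ≤ N)
  have he1 : e0 ≤ e := by linarith
  have he180 : 80 * (r:ℝ) ≤ e := by linarith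
  have hepos : 0 < e := by linarith
  have hM2 : 2 ≤ M := by omega
  have hM2r : (2:ℝ) ≤ M := by exact_mod_cast hM2
  have hMθ : (M:ℝ) ≤ (N:ℝ)^θ := by
    rw [hMdef]; exact Nat.floor_le (by positivity)
  have hM20 : (M:ℝ) ≤ (N:ℝ)^((1:ℝ)/20) := hMθ.trans (Real.rpow_le_rpow_of_exponent_le hN1r hθ2)
  have hM4 : (M:ℝ)^4 * e^2 ≤ N := by
    have h1 : (M:ℝ)^4 ≤ (N:ℝ)^((1:ℝ)/5) := by
      calc (M:ℝ)^4 ≤ ((N:ℝ)^((1:ℝ)/20))^4 := by gcongr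
        _ = (N:ℝ)^((1:ℝ)/5) := by
          rw [← Real.rpow_natCast, ← Real.rpow_mul hNpos.le]; norm_num
    have h2 : e^2 ≤ (N:ℝ)^((4:ℝ)/5) := by
      calc e^2 ≤ ((N:ℝ)^((2:ℝ)/5))^2 := by gcongr
        _ = (N:ℝ)^((4:ℝ)/5) := by
          rw [← Real.rpow_natCast, ← Real.rpow_mul hNpos.le]; norm_num
    calc (M:ℝ)^4 * e^2 ≤ (N:ℝ)^((1:ℝ)/5) * (N:ℝ)^((4:ℝ)/5) := by gcongr
      _ = N := by rw [← Real.rpow_add hNpos]; norm_num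
  have hlM : Real.log M ≤ θ * e := by
    rw [he, ← Real.log_rpow hNpos]
    exact Real.log_le_log (by linarith) hMθ
  have hθ4 : θ ≤ 0.0295 := by
    have : (1.41421:ℝ) ≤ Real.sqrt 2 := Real.le_sqrt_of_sq_le (by norm_num)
    linarith
  have hM80 : 80 * r * M ≤ N := by
    have h1 : 80 * (r:ℝ) * M ≤ N := by
      have h2 : (M:ℝ) ≤ (M:ℝ)^4 := le_self_pow₀ (by linarith) (by norm_num)
      have h3 : e ≤ e^2 := by nlinarith
      calc 80 * (r:ℝ) * M ≤ e * M := by gcongr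
        _ ≤ e^2 * (M:ℝ)^4 := by gcongr
        _ ≤ N := by linarith
    exact_mod_cast h1
  have hM160 : 160 * M ≤ N := by
    refine le_trans ?_ hM80
    gcongr
    omega
  obtain ⟨l, hl⟩ : ∃ l, l = (33 * 𝒩) / (80 * r) := ⟨_, rfl⟩
  have hlM1 : M + 1 < l := by
    have : 33 * M ≤ l := by
      rw [hl, Nat.le_div_iff_mul_le (by omega)]
      calc 33 * M * (80 * r) = 33 * (80 * r * M) := by ring
        _ ≤ 33 * 𝒩 := by omega
    omega
  have hl160 : 160 * l ≤ 33 * 𝒩 := by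
    have h1 : l * (80 * r) ≤ 33 * 𝒩 := by rw [hl]; exact Nat.div_mul_le_self _ _
    have h2 : l * 160 ≤ l * (80 * r) := Nat.mul_le_mul_left _ (by omega)
    omega
  obtain ⟨Xb, hX⟩ : ∃ Xb, Xb + 1 = (3 * (2 * l + 1) * 2^M)^5 * (2 * r^2 * M)^(13*l) := by
    have hpos : 0 < (3 * (2 * l + 1) * 2^M)^5 * (2 * r^2 * M)^(13*l) := by positivity
    exact ⟨_, Nat.sub_add_cancel hpos⟩
  set S := ((Finset.Ico 𝒩 (𝒩 + ⌊(N : ℝ) / Real.log N⌋₊)) ∩ (Finset.Ico N (2 * N))).filter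
            (fun n => ∃ x x₁ x₂ : ℤ,
              s * (n ! : ℤ) = P.eval x ∧
              s * ((n - β₁)! : ℤ) = P.eval x₁ ∧
              s * ((n - β₂)! : ℤ) = P.eval x₂) with hS
  have hM3e : 24 ≤ (M:ℝ)^3 * e := by
    have h1 : (2:ℝ)^3 ≤ (M:ℝ)^3 := by gcongr
    nlinarith
  have key := FS.core r M β₁ β₂ l Xb ⌊3 * (M:ℝ)^3 * e⌋₊ S hr hb1 hb12 hb2 hlM1 hX (FS.TT r κ)
    (fun n => Cc * (n:ℝ)^(2*M) / FS.TT r κ n) (by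
      intro n hn
      rw [hS, Finset.mem_filter, Finset.mem_inter, Finset.mem_Ico, Finset.mem_Ico] at hn
      obtain ⟨⟨⟨h1, h2⟩, h3, h4⟩, hsol⟩ := hn
      have hn0 : 0 < n := by omega
      have hnr : (0:ℝ) < n := by exact_mod_cast hn0
      have hNn : (N:ℝ) ≤ n := by exact_mod_cast h3
      have hn2N : (n:ℝ) ≤ 2 * N := by exact_mod_cast h4.le
      refine ⟨by omega, (FS.TT_pos r κ hκ n).le,
        happ n M β₁ β₂ hd1 hd2 (by omega) hb2 (by omega) hn0 (by omega) hsol, ?_⟩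
      intro t ht
      refine hnum M n l t Xb 𝒩 e θ N he1 (Real.log_le_self hNpos.le) (by linarith) hθ4 (by omega) hM4 hlM hn0
        ?_ (Real.log_le_log hNpos hNn) ?_ (by exact_mod_cast h1) (by exact_mod_cast hN1) hn2N hl ?_ ?_ hX
      · have h5 := Real.log_le_log hnr hn2N
        rw [Real.log_mul (by norm_num) hNpos.ne'] at h5
        have h6 := Real.log_two_lt_d9
        linarith
      · have h5 : (n:ℝ) ≤ 𝒩 + (⌊(N : ℝ) / Real.log N⌋₊ : ℝ) := by exact_mod_cast h2.le
        have h6 : (⌊(N : ℝ) / Real.log N⌋₊ : ℝ) ≤ N / e := Nat.floor_le (by positivity)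
        linarith
      · have h5 : (t:ℝ) ≤ (⌊3 * (M:ℝ)^3 * e⌋₊ : ℝ) + 2 := by exact_mod_cast ht
        have h6 : (⌊3 * (M:ℝ)^3 * e⌋₊ : ℝ) ≤ 3 * (M:ℝ)^3 * e := Nat.floor_le (by positivity)
        linarith
      · rw [Real.log_mul (by norm_num) hNpos.ne']
        have := Real.log_le_self (by norm_num : (0:ℝ) ≤ 4)
        linarith)
  have hT : 3 * (M:ℝ)^3 * e ≤ ((⌊3 * (M:ℝ)^3 * e⌋₊ + 1 : ℕ) : ℝ) := by
    push_cast
    exact (Nat.lt_floor_add_one _).le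
  have hfin : S.card * (⌊3 * (M:ℝ)^3 * e⌋₊ + 1) ≤ 3 * N := key.trans (by omega)
  have hfinr : (S.card : ℝ) * ((⌊3 * (M:ℝ)^3 * e⌋₊ + 1 : ℕ) : ℝ) ≤ 3 * N := by exact_mod_cast hfin
  have hpos : 0 < (M:ℝ)^3 * e := by positivity
  rw [le_div_iff₀ hpos]
  have h7 : (S.card : ℝ) * (3 * (M:ℝ)^3 * e) ≤ (S.card : ℝ) * ((⌊3 * (M:ℝ)^3 * e⌋₊ + 1 : ℕ) : ℝ) := by gcongr
  linarith
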